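/- arXiv:1810.06680 — 2 statements merged into one kernel-verified Lean document; each statement's English description precedes it below -/
import Mathlib

section
/- (Sawyer's mixed weak-type inequality) Let u and v be weights on ℝ with u ∈ A_1 and v ∈ A_1. Then there exists a constant C (depending only on [u]_{A_1} and [v]_{A_1}) such that for every locally integrable function f on ℝ and every t > 0, uv({x ∈ ℝ : M(fv)(x)/v(x) > t}) ≤ (C/t) ∫_ℝ |f(x)| u(x) v(x) dx, where uv denotes the weight u·v. -/
open MeasureTheory ENNReal Set

noncomputable section

/-- A cube in `ℝ`: a closed interval with positive finite side length. -/
def IsCubeR (Q : Set ℝ) : Prop := ∃ (a h : ℝ), 0 < h ∧ Q = Set.Icc a (a + h)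

/-- The measure `w(E) = ∫_E w` associated to a weight `w` on `ℝ`. -/
def wMeasR (w : ℝ → ℝ) (E : Set ℝ) : ℝ≥0∞ := ∫⁻ x in E, ENNReal.ofReal (w x)

/-- A weight on `ℝ`: nonnegative, locally integrable, positive a.e. -/
def IsWeightR (w : ℝ → ℝ) : Prop :=
  Measurable w ∧ (∀ x, 0 ≤ w x) ∧ (∀ᵐ x ∂(volume : Measure ℝ), 0 < w x) ∧
    ∀ Q : Set ℝ, IsCubeR Q → wMeasR w Q < ⊤

/-- `C` is an admissible `A₁` constant for `w` (so `[w]_{A₁} ≤ C`). -/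
def A1ConstR (w : ℝ → ℝ) (C : ℝ≥0∞) : Prop :=
  ∀ Q : Set ℝ, IsCubeR Q →
    (volume Q)⁻¹ * wMeasR w Q ≤ C * essInf (fun x => ENNReal.ofReal (w x)) (volume.restrict Q)

/-- The Hardy–Littlewood maximal function on `ℝ` (over intervals). -/
def maxFnR (f : ℝ → ℝ) (x : ℝ) : ℝ≥0∞ :=
  ⨆ (Q : Set ℝ) (_ : IsCubeR Q) (_ : x ∈ Q),
    (volume Q)⁻¹ * ∫⁻ y in Q, ENNReal.ofReal |f y|

open Filter Topology Metric

/-- Auxiliary extended-valued `A₁` weight. -/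
structure A1W (w : ℝ → ℝ≥0∞) (C : ℝ≥0∞) : Prop where
  meas : Measurable w
  fin : ∀ x, w x ≠ ⊤
  pos : ∀ᵐ x ∂(volume : Measure ℝ), 0 < w x
  loc : ∀ c r : ℝ, 0 < r → ∫⁻ x in closedBall c r, w x ≠ ⊤
  a1 : ∀ c r : ℝ, 0 < r → ∫⁻ x in closedBall c r, w x ≤
    C * volume (closedBall c r) * essInf w (volume.restrict (closedBall c r))

lemma vol_pos {c r : ℝ} (hr : 0 < r) : volume (closedBall c r) ≠ 0 := by
  rw [Real.volume_closedBall]; simp; linarith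

lemma vol_fin {c r : ℝ} : volume (closedBall c r) ≠ ⊤ := by
  rw [Real.volume_closedBall]; exact ENNReal.ofReal_ne_top

lemma vol_five {c r : ℝ} : volume (closedBall c (5 * r)) = 5 * volume (closedBall c r) := by
  rw [Real.volume_closedBall, Real.volume_closedBall]
  rw [show 2 * (5 * r) = 5 * (2 * r) by ring, ENNReal.ofReal_mul (by norm_num)]
  simp

lemma ae_iota (w : ℝ → ℝ≥0∞) (c r : ℝ) :
    ∀ᵐ x ∂(volume : Measure ℝ), x ∈ closedBall c r →
      essInf w (volume.restrict (closedBall c r)) ≤ w x := by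
  rw [← ae_restrict_iff' measurableSet_closedBall]
  exact ae_essInf_le

lemma iota_mul_le (w : ℝ → ℝ≥0∞) (c r : ℝ) {F : Set ℝ} (hF : MeasurableSet F)
    (hFB : F ⊆ closedBall c r) :
    essInf w (volume.restrict (closedBall c r)) * volume F ≤ ∫⁻ x in F, w x := by
  rw [← setLIntegral_const]
  apply setLIntegral_mono_ae' hF
  filter_upwards [ae_iota w c r] with x hx hxF using hx (hFB hxF)

lemma A1W.set_le {w : ℝ → ℝ≥0∞} {C : ℝ≥0∞} (h : A1W w C) {c r : ℝ} (hr : 0 < r)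
    {F : Set ℝ} (hF : MeasurableSet F) (hFB : F ⊆ closedBall c r) :
    (∫⁻ x in closedBall c r, w x) * volume F ≤
      C * volume (closedBall c r) * ∫⁻ x in F, w x := by
  grw [h.a1 c r hr, mul_assoc, iota_mul_le w c r hF hFB]

lemma A1W.iota_pos {w : ℝ → ℝ≥0∞} {C : ℝ≥0∞} (h : A1W w C) {c r : ℝ} (hr : 0 < r) :
    0 < essInf w (volume.restrict (closedBall c r)) := by
  by_contra hne
  have h0 : essInf w (volume.restrict (closedBall c r)) = 0 := by simpa using hne
  have h1 := h.a1 c r hr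
  rw [h0, mul_zero] at h1
  have h2 : ∫⁻ x in closedBall c r, w x = 0 := by simpa using h1
  rw [lintegral_eq_zero_iff h.meas] at h2
  have h3 : ∀ᵐ x ∂(volume.restrict (closedBall c r)), False := by
    filter_upwards [h2, ae_restrict_of_ae h.pos] with x hx hx'
    simp_all
  have h4 : volume.restrict (closedBall c r) = 0 := by
    rw [← ae_eq_bot]; exact Filter.eventually_false_iff_eq_bot.1 h3
  rw [Measure.restrict_eq_zero] at h4
  exact vol_pos hr h4

lemma A1W.iota_fin {w : ℝ → ℝ≥0∞} {C : ℝ≥0∞} (h : A1W w C) {c r : ℝ} (hr : 0 < r) :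
    essInf w (volume.restrict (closedBall c r)) ≠ ⊤ := by
  intro h0
  have h1 := iota_mul_le w c r measurableSet_closedBall (subset_refl _)
  rw [h0, ENNReal.top_mul (vol_pos hr)] at h1
  exact h.loc c r hr (top_le_iff.1 h1)

lemma select {V : ℝ → ℝ≥0∞} {Cv : ℝ≥0∞} (hV : A1W V Cv) {c r : ℝ} (hr : 0 < r)
    {l : ℝ≥0∞} (hl : ∫⁻ x in closedBall c r, V x ≤ l * volume (closedBall c r)) :
    ∀ᵐ x ∂(volume : Measure ℝ), x ∈ closedBall c r → l < V x →
      ∃ p : ℝ × ℝ, 0 < p.2 ∧ p.2 ≤ r ∧ x ∈ closedBall p.1 p.2 ∧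
        closedBall p.1 p.2 ⊆ closedBall c r ∧
        l * volume (closedBall p.1 p.2) < ∫⁻ y in closedBall p.1 p.2, V y ∧
        ∫⁻ y in closedBall p.1 p.2, V y ≤ 2 * l * volume (closedBall p.1 p.2) := by
  have hIndFin : ∫⁻ y, (closedBall c r).indicator V y ≠ ⊤ := by
    rw [lintegral_indicator measurableSet_closedBall]; exact hV.loc c r hr
  have hL := (IsUnifLocDoublingMeasure.vitaliFamily (volume : Measure ℝ) 1).ae_tendsto_lintegral_div'
    (hV.meas.indicator measurableSet_closedBall) hIndFin
  filter_upwards [hL] with x hx hxJ hlx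
  set w : ℕ → ℝ := fun n => x + (1/2:ℝ)^n * (c - x) with hw
  set d : ℕ → ℝ := fun n => (1/2:ℝ)^n * r with hd
  have hdpos : ∀ n, 0 < d n := fun n => by positivity
  have hxc : |c - x| ≤ r := by
    rw [mem_closedBall, Real.dist_eq] at hxJ; rwa [abs_sub_comm]
  have hmem : ∀ n, x ∈ closedBall (w n) (d n) := by
    intro n
    rw [mem_closedBall, Real.dist_eq, hw, hd]
    simp only [sub_add_cancel_left, abs_neg, abs_mul, abs_pow]
    rw [abs_of_pos (by norm_num : (0:ℝ) < 1/2)]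
    gcongr
  have hsub : ∀ n, closedBall (w (n+1)) (d (n+1)) ⊆ closedBall (w n) (d n) := by
    intro n
    apply closedBall_subset_closedBall'
    rw [Real.dist_eq]
    have : w (n+1) - w n = - ((1/2:ℝ)^(n+1) * (c - x)) := by
      simp only [hw]; ring
    rw [this, abs_neg, abs_mul, abs_of_pos (by positivity)]
    have h2 : d n = d (n+1) + (1/2:ℝ)^(n+1) * r := by simp only [hd]; ring
    rw [h2]; gcongr
  have h0 : closedBall (w 0) (d 0) = closedBall c r := by simp [hw, hd]
  have hsubJ : ∀ n, closedBall (w n) (d n) ⊆ closedBall c r := by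
    intro n
    induction n with
    | zero => rw [h0]
    | succ n ih => exact (hsub n).trans ih
  have hdr : ∀ n, d n ≤ r := by
    intro n
    simp only [hd]
    have : (1/2:ℝ)^n ≤ 1 := pow_le_one₀ (by norm_num) (by norm_num)
    nlinarith
  have hdlim : Tendsto d atTop (𝓝[>] 0) := by
    rw [tendsto_nhdsWithin_iff]
    refine ⟨?_, Eventually.of_forall hdpos⟩
    have := (tendsto_pow_atTop_nhds_zero_of_lt_one (r := (1/2:ℝ)) (by norm_num) (by norm_num)).mul_const r
    simpa [hd] using this
  have ht := hx.comp (IsUnifLocDoublingMeasure.tendsto_closedBall_filterAt (volume : Measure ℝ)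
    (K := 1) w d hdlim (Eventually.of_forall fun n => by simpa using hmem n))
  rw [indicator_of_mem hxJ] at ht
  have hex : ∃ n, l * volume (closedBall (w n) (d n)) < ∫⁻ y in closedBall (w n) (d n), V y := by
    obtain ⟨n, hn⟩ := (ht.eventually (lt_mem_nhds hlx)).exists
    refine ⟨n, ?_⟩
    have h2 := ENNReal.mul_lt_of_lt_div hn
    refine h2.trans_eq ?_
    apply setLIntegral_congr_fun measurableSet_closedBall
    intro y hy
    exact indicator_of_mem (hsubJ n hy) _
  classical
  set N := Nat.find hex with hN
  have hN1 := Nat.find_spec hex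
  rw [← hN] at hN1
  have hNpos : N ≠ 0 := by
    intro h
    rw [h, h0] at hN1
    exact absurd hN1 (not_lt.2 hl)
  obtain ⟨M, hM⟩ := Nat.exists_eq_succ_of_ne_zero hNpos
  have hM1 := not_lt.1 (Nat.find_min hex (m := M) (by omega))
  refine ⟨(w N, d N), hdpos N, hdr N, hmem N, hsubJ N, hN1, ?_⟩
  have hv : volume (closedBall (w M) (d M)) = 2 * volume (closedBall (w N) (d N)) := by
    rw [Real.volume_closedBall, Real.volume_closedBall, hM]
    rw [show 2 * d M = 2 * (2 * d (M.succ)) by simp only [hd, Nat.succ_eq_add_one]; ring,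
      ENNReal.ofReal_mul (p := 2) (by norm_num)]
    simp
  calc ∫⁻ y in closedBall (w N) (d N), V y ≤ ∫⁻ y in closedBall (w M) (d M), V y := by
        apply lintegral_mono_set; rw [hM]; exact hsub M
    _ ≤ l * volume (closedBall (w M) (d M)) := hM1
    _ = 2 * l * volume (closedBall (w N) (d N)) := by rw [hv]; ring

lemma countable_balls {ι : Type*} {t : Set ι} {x : ι → ℝ} {r : ι → ℝ}
    (h : t.PairwiseDisjoint fun a => closedBall (x a) (r a)) (hr : ∀ a ∈ t, 0 < r a) :
    t.Countable :=
  h.countable_of_nonempty_interior fun a ha =>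
    (nonempty_ball.2 (hr a ha)).mono ball_subset_interior_closedBall

lemma vitali5 {t : Set (ℝ × ℝ)} {R : ℝ} (hR : ∀ p ∈ t, p.2 ≤ R) (hpos : ∀ p ∈ t, 0 < p.2) :
    ∃ s ⊆ t, (s.PairwiseDisjoint fun p => closedBall p.1 p.2) ∧ s.Countable ∧
      ∀ p ∈ t, ∃ q ∈ s, closedBall p.1 p.2 ⊆ closedBall q.1 (5 * q.2) := by
  obtain ⟨s, hst, hd, hc⟩ := Vitali.exists_disjoint_subfamily_covering_enlargement_closedBall t
    (fun p => p.1) (fun p => p.2) R hR 5 (by norm_num)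
  exact ⟨s, hst, hd, countable_balls hd (fun a ha => hpos a (hst ha)), hc⟩

lemma setLIntegral_biUnion_le {ι : Type*} {s : Set ι} (hs : s.Countable) (t : ι → Set ℝ)
    (f : ℝ → ℝ≥0∞) : ∫⁻ x in ⋃ i ∈ s, t i, f x ≤ ∑' i : s, ∫⁻ x in t i, f x := by
  have := hs.to_subtype
  rw [biUnion_eq_iUnion]
  exact lintegral_iUnion_le _ _

lemma decay_cover {U V : ℝ → ℝ≥0∞} {Cu Cv : ℝ≥0∞} (hU : A1W U Cu) (hV : A1W V Cv)
    {c r : ℝ} (hr : 0 < r) (hCv : Cv ≠ ⊤) (hCv1 : 1 ≤ Cv)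
    {l : ℝ≥0∞} (hl : essInf V (volume.restrict (closedBall c r)) ≤ l) (hlt : l ≠ ⊤) :
    ∫⁻ x in closedBall c r ∩ {x | Cv * l < V x}, U x ≤
      10 * Cu * ∫⁻ x in closedBall c r ∩ {x | l < V x ∧ V x ≤ 4 * (Cv * l)}, U x := by
  set J := closedBall c r with hJ
  have hl0 : l ≠ 0 := (lt_of_lt_of_le (hV.iota_pos hr) hl).ne'
  have hCv0 : Cv ≠ 0 := by intro h; simp [h] at hCv1
  set lam := Cv * l with hlam
  have hlam0 : lam ≠ 0 := mul_ne_zero hCv0 hl0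
  have hlamt : lam ≠ ⊤ := ENNReal.mul_ne_top hCv hlt
  have hJl : ∫⁻ x in J, V x ≤ lam * volume J := by
    calc ∫⁻ x in J, V x ≤ Cv * volume J * essInf V (volume.restrict J) := hV.a1 c r hr
      _ ≤ Cv * volume J * l := by gcongr
      _ = lam * volume J := by rw [hlam]; ring
  have hsel := select hV hr hJl
  set t : Set (ℝ × ℝ) := {p | 0 < p.2 ∧ p.2 ≤ r ∧ closedBall p.1 p.2 ⊆ J ∧
        lam * volume (closedBall p.1 p.2) < ∫⁻ y in closedBall p.1 p.2, V y ∧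
        ∫⁻ y in closedBall p.1 p.2, V y ≤ 2 * lam * volume (closedBall p.1 p.2)} with ht
  obtain ⟨s, hst, hd, hsc, hcov⟩ := vitali5 (t := t) (R := r) (fun p hp => hp.2.1) (fun p hp => hp.1)
  have hmF : ∀ p : ℝ × ℝ, MeasurableSet (closedBall p.1 p.2 ∩ {x | V x ≤ 4 * lam}) := fun p =>
    measurableSet_closedBall.inter (measurableSet_le hV.meas measurable_const)
  have hcov' : ∫⁻ x in J ∩ {x | lam < V x}, U x ≤
      ∫⁻ x in ⋃ p ∈ s, closedBall p.1 (5 * p.2), U x := by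
    apply lintegral_mono_set'
    filter_upwards [hsel] with x hx
    rintro ⟨hxJ, hxl⟩
    obtain ⟨p, h1, h2, h3, h4, h5, h6⟩ := hx hxJ hxl
    obtain ⟨q, hq, hq'⟩ := hcov p ⟨h1, h2, h4, h5, h6⟩
    exact mem_biUnion hq (hq' h3)
  have hterm : ∀ p ∈ s, ∫⁻ x in closedBall p.1 (5 * p.2), U x ≤
      10 * Cu * ∫⁻ x in closedBall p.1 p.2 ∩ {x | V x ≤ 4 * lam}, U x := by
    intro p hp
    obtain ⟨h1, h2, h3, h4, h5⟩ := hst hp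
    set L := closedBall p.1 p.2 with hL
    have hL0 : volume L ≠ 0 := vol_pos h1
    have hLt : volume L ≠ ⊤ := vol_fin
    have hbig : volume (L ∩ {x | 4 * lam < V x}) * 2 ≤ volume L := by
      have hm : MeasurableSet (L ∩ {x | 4 * lam < V x}) :=
        measurableSet_closedBall.inter (measurableSet_lt measurable_const hV.meas)
      have e1 : (4 * lam) * volume (L ∩ {x | 4 * lam < V x}) ≤ 2 * lam * volume L := by
        calc (4 * lam) * volume (L ∩ {x | 4 * lam < V x})
            = ∫⁻ x in L ∩ {x | 4 * lam < V x}, (4 * lam) := by rw [setLIntegral_const]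
          _ ≤ ∫⁻ x in L ∩ {x | 4 * lam < V x}, V x := by
              apply setLIntegral_mono' hm
              intro x hx; exact hx.2.le
          _ ≤ ∫⁻ x in L, V x := lintegral_mono_set inter_subset_left
          _ ≤ _ := h5
      have e2 : (2 * lam) * (volume (L ∩ {x | 4 * lam < V x}) * 2) ≤ (2 * lam) * volume L := by
        calc _ = (4 * lam) * volume (L ∩ {x | 4 * lam < V x}) := by ring
          _ ≤ _ := e1
      exact (ENNReal.mul_le_mul_iff_right (by simpa using hlam0)
        (ENNReal.mul_ne_top (by simp) hlamt)).1 e2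
    have hsum : volume L ≤ volume (L ∩ {x | V x ≤ 4 * lam}) + volume (L ∩ {x | 4 * lam < V x}) := by
      refine (measure_mono ?_).trans (measure_union_le _ _)
      intro x hx
      rcases le_or_gt (V x) (4 * lam) with h | h
      · exact Or.inl ⟨hx, h⟩
      · exact Or.inr ⟨hx, h⟩
    have hhalf : volume L ≤ 2 * volume (L ∩ {x | V x ≤ 4 * lam}) := by
      have e3 : volume L + volume L ≤ volume L + 2 * volume (L ∩ {x | V x ≤ 4 * lam}) := by
        calc volume L + volume L ≤ _ := add_le_add hsum hsum
          _ = 2 * volume (L ∩ {x | V x ≤ 4 * lam}) + volume (L ∩ {x | 4 * lam < V x}) * 2 := by ring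
          _ ≤ 2 * volume (L ∩ {x | V x ≤ 4 * lam}) + volume L := by gcongr
          _ = _ := by ring
      exact (ENNReal.add_le_add_iff_left hLt).1 e3
    have hsub5 : L ⊆ closedBall p.1 (5 * p.2) := closedBall_subset_closedBall (by linarith)
    have e4 := hU.set_le (c := p.1) (r := 5 * p.2) (by linarith) (hmF p)
      (inter_subset_left.trans hsub5)
    rw [vol_five] at e4
    have e5 : (∫⁻ x in closedBall p.1 (5 * p.2), U x) * volume L ≤
        (10 * Cu * ∫⁻ x in L ∩ {x | V x ≤ 4 * lam}, U x) * volume L := by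
      calc (∫⁻ x in closedBall p.1 (5 * p.2), U x) * volume L
          ≤ (∫⁻ x in closedBall p.1 (5 * p.2), U x) * (2 * volume (L ∩ {x | V x ≤ 4 * lam})) := by
            gcongr
        _ = 2 * ((∫⁻ x in closedBall p.1 (5 * p.2), U x) * (volume (L ∩ {x | V x ≤ 4 * lam}))) := by
            ring
        _ ≤ 2 * (Cu * (5 * volume L) * ∫⁻ x in L ∩ {x | V x ≤ 4 * lam}, U x) := by gcongr
        _ = _ := by ring
    exact (ENNReal.mul_le_mul_iff_left hL0 hLt).1 e5
  have hlow : ∀ p ∈ s, ∀ᵐ x ∂(volume : Measure ℝ), x ∈ closedBall p.1 p.2 → l < V x := by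
    intro p hp
    obtain ⟨h1, h2, h3, h4, h5⟩ := hst hp
    filter_upwards [ae_iota V p.1 p.2] with x hx hxp
    refine lt_of_lt_of_le ?_ (hx hxp)
    have e1 := h4.trans_le (hV.a1 p.1 p.2 h1)
    by_contra hcon
    rw [not_lt] at hcon
    apply absurd e1
    rw [not_lt, hlam]
    calc _ ≤ Cv * volume (closedBall p.1 p.2) * l := by gcongr
      _ = _ := by ring
  have hlow' : ∀ᵐ x ∂(volume : Measure ℝ), ∀ p ∈ s, x ∈ closedBall p.1 p.2 → l < V x :=
    (ae_ball_iff hsc).2 hlow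
  calc ∫⁻ x in J ∩ {x | lam < V x}, U x
      ≤ ∫⁻ x in ⋃ p ∈ s, closedBall p.1 (5 * p.2), U x := hcov'
    _ ≤ ∑' p : s, ∫⁻ x in closedBall p.1.1 (5 * p.1.2), U x := setLIntegral_biUnion_le hsc _ _
    _ ≤ ∑' p : s, 10 * Cu * ∫⁻ x in closedBall p.1.1 p.1.2 ∩ {x | V x ≤ 4 * lam}, U x :=
        ENNReal.tsum_le_tsum fun p => hterm p.1 p.2
    _ = 10 * Cu * ∑' p : s, ∫⁻ x in closedBall p.1.1 p.1.2 ∩ {x | V x ≤ 4 * lam}, U x :=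
        ENNReal.tsum_mul_left
    _ = 10 * Cu * ∫⁻ x in ⋃ p ∈ s, (closedBall p.1 p.2 ∩ {x | V x ≤ 4 * lam}), U x := by
        rw [lintegral_biUnion hsc (fun p _ => hmF p)]
        exact hd.mono fun p => inter_subset_left
    _ ≤ _ := by
        gcongr 10 * Cu * ?_
        apply lintegral_mono_set'
        filter_upwards [hlow'] with x hx hxm
        obtain ⟨p, hp, hxp, hxV⟩ := mem_iUnion₂.1 hxm
        exact ⟨(hst hp).2.2.1 hxp, hx p hp hxp, hxV⟩

lemma decay_step {U V : ℝ → ℝ≥0∞} {Cu Cv : ℝ≥0∞} (hU : A1W U Cu) (hV : A1W V Cv)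
    {c r : ℝ} (hr : 0 < r) (hCu : Cu ≠ ⊤) (hCv : Cv ≠ ⊤) (hCv1 : 1 ≤ Cv)
    {l : ℝ≥0∞} (hl : essInf V (volume.restrict (closedBall c r)) ≤ l) (hlt : l ≠ ⊤) :
    ∫⁻ x in closedBall c r ∩ {x | 4 * Cv * l < V x}, U x ≤
      (10 * Cu / (1 + 10 * Cu)) * ∫⁻ x in closedBall c r ∩ {x | l < V x}, U x := by
  have h1 := decay_cover hU hV hr hCv hCv1 hl hlt
  rw [show 4 * Cv * l = 4 * (Cv * l) by ring]
  set J := closedBall c r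
  set K := 10 * Cu with hK
  have hKt : K ≠ ⊤ := ENNReal.mul_ne_top (by simp) hCu
  set b := ∫⁻ x in J ∩ {x | 4 * (Cv * l) < V x}, U x with hb
  set m := ∫⁻ x in J ∩ {x | l < V x ∧ V x ≤ 4 * (Cv * l)}, U x with hm
  have hle : b ≤ ∫⁻ x in J ∩ {x | Cv * l < V x}, U x := by
    apply lintegral_mono_set
    intro x hx
    refine ⟨hx.1, ?_⟩
    have hx2 : 4 * (Cv * l) < V x := hx.2
    show Cv * l < V x
    refine lt_of_le_of_lt ?_ hx2
    exact le_mul_of_one_le_left' (by norm_num)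
  have hbm : b + m = ∫⁻ x in J ∩ {x | l < V x}, U x := by
    rw [hb, hm, ← lintegral_union]
    · congr 2
      ext x
      simp only [mem_union, mem_inter_iff, mem_ofPred_eq]
      have hll : l ≤ 4 * (Cv * l) := by
        rw [← mul_assoc]
        refine le_mul_of_one_le_left' ?_
        calc (1:ℝ≥0∞) ≤ Cv := hCv1
          _ ≤ 4 * Cv := le_mul_of_one_le_left' (by norm_num)
      constructor
      · rintro (h | h)
        · exact ⟨h.1, hll.trans_lt h.2⟩
        · exact ⟨h.1, h.2.1⟩
      · rintro ⟨h, h'⟩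
        rcases le_or_gt (V x) (4 * (Cv * l)) with h2 | h2
        · exact Or.inr ⟨h, h', h2⟩
        · exact Or.inl ⟨h, h2⟩
    · exact measurableSet_closedBall.inter ((measurableSet_lt measurable_const hV.meas).inter
        (measurableSet_le hV.meas measurable_const))
    · rw [Set.disjoint_left]
      rintro x ⟨_, h⟩ ⟨_, _, h'⟩
      exact absurd h (not_lt.2 h')
  rw [← hbm, ← ENNReal.mul_div_right_comm, ENNReal.le_div_iff_mul_le (by simp) (by simp [hKt])]
  calc b * (1 + K) = b + K * b := by ring
    _ ≤ K * m + K * b := by gcongr; exact hle.trans h1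
    _ = _ := by ring

lemma decay {U V : ℝ → ℝ≥0∞} {Cu Cv : ℝ≥0∞} (hU : A1W U Cu) (hV : A1W V Cv)
    {c r : ℝ} (hr : 0 < r) (hCu : Cu ≠ ⊤) (hCv : Cv ≠ ⊤) (hCv1 : 1 ≤ Cv) (n : ℕ) :
    ∫⁻ x in closedBall c r ∩
        {x | (4 * Cv) ^ n * essInf V (volume.restrict (closedBall c r)) < V x}, U x ≤
      (10 * Cu / (1 + 10 * Cu)) ^ n * ∫⁻ x in closedBall c r, U x := by
  induction n with
  | zero => simp only [pow_zero, one_mul]; exact lintegral_mono_set inter_subset_left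
  | succ n ih =>
    have h1 : (1:ℝ≥0∞) ≤ 4 * Cv := hCv1.trans (le_mul_of_one_le_left' (by norm_num))
    have := decay_step hU hV hr hCu hCv hCv1
      (l := (4 * Cv) ^ n * essInf V (volume.restrict (closedBall c r)))
      (le_mul_of_one_le_left' (one_le_pow₀ h1))
      (ENNReal.mul_ne_top (ENNReal.pow_ne_top (ENNReal.mul_ne_top (by simp) hCv)) (hV.iota_fin hr))
    rw [pow_succ', mul_assoc]
    refine this.trans ?_
    rw [pow_succ', mul_assoc]
    gcongr

lemma geom {A : ℝ≥0∞} (hA : 2 ≤ A) (hAt : A ≠ ⊤) (y : ℝ≥0∞) (hy : y ≠ ⊤) :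
    ∑' m : ℤ, (if A ^ m < y then A ^ m else 0) ≤ 2 * y := by
  have hA0 : A ≠ 0 := by intro h; simp [h] at hA
  have hA1 : 1 < A := lt_of_lt_of_le (by norm_num) hA
  by_cases hy0 : y = 0
  · simp [hy0]
  obtain ⟨j, hj1, hj2⟩ := ENNReal.exists_mem_Ioc_zpow hy0 hy hA1 hAt
  have hinj : Function.Injective (fun i : ℕ => j - (i : ℤ)) := by
    intro a b h; simpa using h
  rw [← hinj.tsum_eq]
  · calc ∑' i : ℕ, (if A ^ (j - (i : ℤ)) < y then A ^ (j - (i : ℤ)) else 0)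
        ≤ ∑' i : ℕ, A ^ j * (2⁻¹ : ℝ≥0∞) ^ i := by
          apply ENNReal.tsum_le_tsum
          intro i
          have : A ^ (j - (i : ℤ)) ≤ A ^ j * (2⁻¹ : ℝ≥0∞) ^ i := by
            rw [ENNReal.zpow_sub hA0 hAt, zpow_natCast, ← ENNReal.inv_pow]
            gcongr
          split_ifs
          · exact this
          · exact zero_le
      _ = A ^ j * 2 := by
          rw [ENNReal.tsum_mul_left, ENNReal.tsum_geometric, ENNReal.one_sub_inv_two, inv_inv]
      _ ≤ 2 * y := by rw [mul_comm]; gcongr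
  · intro m hm
    rw [Function.mem_support] at hm
    have hm' : A ^ m < y := by
      by_contra h; simp [h] at hm
    have : m ≤ j := by
      by_contra h
      have : A ^ (j + 1) ≤ A ^ m := ENNReal.zpow_le_of_le hA1.le (by omega)
      exact absurd (hj2.trans this) (not_le.2 hm')
    exact ⟨(j - m).toNat, by simp; omega⟩

lemma class_bound {U V G : ℝ → ℝ≥0∞} {Cu Cv A : ℝ≥0∞} (hU : A1W U Cu) (hV : A1W V Cv)
    (hA : 2 ≤ A) (hAt : A ≠ ⊤) (R : ℝ) (n : ℕ) (m : ℤ) (S : ℤ → Set (ℝ × ℝ))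
    (hpos : ∀ k, ∀ p ∈ S k, 0 < p.2) (hR : ∀ k, ∀ p ∈ S k, p.2 ≤ R)
    (hG : ∀ k, ∀ p ∈ S k, A ^ k * volume (closedBall p.1 p.2) ≤ ∫⁻ x in closedBall p.1 p.2, G x)
    (hd : ∀ k, (S k).PairwiseDisjoint fun p => closedBall p.1 p.2)
    (hv1 : ∀ k, ∀ p ∈ S k,
      A ^ (k - n) < essInf V (volume.restrict (closedBall p.1 (5 * p.2))))
    (hv2 : ∀ k, ∀ p ∈ S k,
      essInf V (volume.restrict (closedBall p.1 (5 * p.2))) ≤ A ^ (k - n + 1))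
    (hu : ∀ k, ∀ p ∈ S k,
      essInf U (volume.restrict (closedBall p.1 (5 * p.2))) ≤ A ^ (m + 1)) :
    ∑' k : ℤ, ∑' p : S k, A ^ k * ∫⁻ x in closedBall p.1.1 (5 * p.1.2), U x ≤
      50 * Cu * Cv * A ^ 2 * (A ^ m * ∫⁻ x in ⋃ k, ⋃ p ∈ S k, closedBall p.1 p.2, G x) := by
  have hA0 : A ≠ 0 := by intro h; simp [h] at hA
  have hcount : ∀ k, (S k).Countable := fun k => countable_balls (hd k) (hpos k)
  set Wk : ℤ → Set ℝ := fun k => ⋃ p ∈ S k, closedBall p.1 p.2 with hWk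
  set W : Set ℝ := ⋃ k, Wk k with hW
  have hWkm : ∀ k, MeasurableSet (Wk k) := fun k =>
    MeasurableSet.biUnion (hcount k) fun p _ => measurableSet_closedBall
  have hWm : MeasurableSet W := MeasurableSet.iUnion hWkm
  have hAm : A ^ (m + 1) = A ^ m * A := by
    rw [ENNReal.zpow_add hA0 hAt, zpow_one]
  have hAk : ∀ k : ℤ, A ^ k = A ^ n * A ^ (k - n) := by
    intro k
    rw [← zpow_natCast, ← ENNReal.zpow_add hA0 hAt]; congr 1; ring
  -- step 1
  have step1 : ∑' k : ℤ, ∑' p : S k, A ^ k * ∫⁻ x in closedBall p.1.1 (5 * p.1.2), U x ≤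
      5 * Cu * A ^ (m + 1) * A ^ n * ∑' k : ℤ, A ^ (k - n) * volume (Wk k) := by
    rw [← ENNReal.tsum_mul_left]
    apply ENNReal.tsum_le_tsum
    intro k
    have hvol : volume (Wk k) = ∑' p : S k, volume (closedBall p.1.1 p.1.2) :=
      measure_biUnion (hcount k) (hd k) fun p _ => measurableSet_closedBall
    rw [hvol, ← ENNReal.tsum_mul_left, ← ENNReal.tsum_mul_left]
    apply ENNReal.tsum_le_tsum
    rintro ⟨p, hp⟩
    have h1 := hU.a1 p.1 (5 * p.2) (by linarith [hpos k p hp])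
    rw [vol_five] at h1
    calc A ^ k * ∫⁻ x in closedBall p.1 (5 * p.2), U x
        ≤ A ^ k * (Cu * (5 * volume (closedBall p.1 p.2)) * A ^ (m + 1)) := by
          gcongr
          refine h1.trans ?_
          gcongr
          exact hu k p hp
      _ = _ := by rw [hAk k]; ring
  -- step 2
  have hlow : ∀ᵐ x ∂(volume : Measure ℝ), ∀ k, x ∈ Wk k → A ^ (k - n) < V x := by
    rw [ae_all_iff]
    intro k
    have : ∀ᵐ x ∂(volume : Measure ℝ), ∀ p ∈ S k, x ∈ closedBall p.1 p.2 → A ^ (k - n) < V x := by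
      rw [ae_ball_iff (hcount k)]
      intro p hp
      filter_upwards [ae_iota V p.1 (5 * p.2)] with x hx hxp
      exact (hv1 k p hp).trans_le
        (hx (closedBall_subset_closedBall (by linarith [hpos k p hp]) hxp))
    filter_upwards [this] with x hx hxW
    obtain ⟨p, hp, hxp⟩ := mem_iUnion₂.1 hxW
    exact hx p hp hxp
  have step2 : ∑' k : ℤ, A ^ (k - n) * volume (Wk k) ≤ 2 * ∫⁻ x in W, V x := by
    calc ∑' k : ℤ, A ^ (k - n) * volume (Wk k)
        = ∑' k : ℤ, ∫⁻ x, (Wk k).indicator (fun _ => A ^ (k - n)) x := by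
          congr 1; ext k
          rw [lintegral_indicator (hWkm k), setLIntegral_const]
      _ = ∫⁻ x, ∑' k : ℤ, (Wk k).indicator (fun _ => A ^ (k - n)) x := by
          rw [lintegral_tsum]
          intro k
          exact (measurable_const.indicator (hWkm k)).aemeasurable
      _ ≤ ∫⁻ x, W.indicator (fun x => 2 * V x) x := by
          apply lintegral_mono_ae
          filter_upwards [hlow] with x hx
          by_cases hxW : x ∈ W
          · rw [indicator_of_mem hxW]
            calc ∑' k : ℤ, (Wk k).indicator (fun _ => A ^ (k - n)) x
                ≤ ∑' k : ℤ, (if A ^ (k - n) < V x then A ^ (k - n) else 0) := by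
                  apply ENNReal.tsum_le_tsum
                  intro k
                  by_cases hk : x ∈ Wk k
                  · rw [indicator_of_mem hk, if_pos (hx k hk)]
                  · rw [indicator_of_notMem hk]; exact zero_le
              _ = ∑' k : ℤ, (if A ^ k < V x then A ^ k else 0) :=
                  (Equiv.subRight (n : ℤ)).tsum_eq (fun k : ℤ => if A ^ k < V x then A ^ k else 0)
              _ ≤ _ := geom hA hAt _ (hV.fin x)
          · have : ∀ k, x ∉ Wk k := fun k hk => hxW (mem_iUnion.2 ⟨k, hk⟩)
            simp [this]
      _ = 2 * ∫⁻ x in W, V x := by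
          rw [lintegral_indicator hWm, lintegral_const_mul _ hV.meas]
  -- step 3
  have step3 : A ^ n * ∫⁻ x in W, V x ≤ 5 * Cv * A * ∫⁻ x in W, G x := by
    set t : Set (ℤ × (ℝ × ℝ)) := {q | q.2 ∈ S q.1} with ht
    obtain ⟨s, hst, hsd, hcov⟩ := Vitali.exists_disjoint_subfamily_covering_enlargement_closedBall t
      (fun q => q.2.1) (fun q => q.2.2) R (fun q hq => hR q.1 q.2 hq) 5 (by norm_num)
    have hsc : s.Countable := countable_balls hsd (fun q hq => hpos q.1 q.2 (hst hq))
    calc A ^ n * ∫⁻ x in W, V x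
        ≤ A ^ n * ∫⁻ x in ⋃ q ∈ s, closedBall q.2.1 (5 * q.2.2), V x := by
          gcongr
          intro x hx
          obtain ⟨k, hk⟩ := mem_iUnion.1 hx
          obtain ⟨p, hp, hxp⟩ := mem_iUnion₂.1 hk
          obtain ⟨q, hq, hq'⟩ := hcov (k, p) hp
          exact mem_biUnion hq (hq' hxp)
      _ ≤ A ^ n * ∑' q : s, ∫⁻ x in closedBall q.1.2.1 (5 * q.1.2.2), V x := by
          gcongr; exact setLIntegral_biUnion_le hsc _ _
      _ = ∑' q : s, A ^ n * ∫⁻ x in closedBall q.1.2.1 (5 * q.1.2.2), V x :=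
          ENNReal.tsum_mul_left.symm
      _ ≤ ∑' q : s, 5 * Cv * A * ∫⁻ x in closedBall q.1.2.1 q.1.2.2, G x := by
          apply ENNReal.tsum_le_tsum
          rintro ⟨⟨k, p⟩, hq⟩
          have hp : p ∈ S k := hst hq
          have h1 := hV.a1 p.1 (5 * p.2) (by linarith [hpos k p hp])
          rw [vol_five] at h1
          have h2 : A ^ (k - n + 1) = A ^ (k - n) * A := by
            rw [ENNReal.zpow_add hA0 hAt, zpow_one]
          calc A ^ n * ∫⁻ x in closedBall p.1 (5 * p.2), V x
              ≤ A ^ n * (Cv * (5 * volume (closedBall p.1 p.2)) * (A ^ (k - n) * A)) := by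
                gcongr
                refine h1.trans ?_
                rw [← h2]
                gcongr
                exact hv2 k p hp
            _ = 5 * Cv * A * (A ^ k * volume (closedBall p.1 p.2)) := by rw [hAk k]; ring
            _ ≤ _ := by gcongr; exact hG k p hp
      _ = 5 * Cv * A * ∑' q : s, ∫⁻ x in closedBall q.1.2.1 q.1.2.2, G x :=
          ENNReal.tsum_mul_left
      _ = 5 * Cv * A * ∫⁻ x in ⋃ q ∈ s, closedBall q.2.1 q.2.2, G x := by
          rw [lintegral_biUnion hsc (fun _ _ => measurableSet_closedBall) hsd]
      _ ≤ _ := by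
          gcongr
          intro x hx
          obtain ⟨q, hq, hxq⟩ := mem_iUnion₂.1 hx
          exact mem_iUnion.2 ⟨q.1, mem_biUnion (hst hq) hxq⟩
  calc _ ≤ _ := step1
    _ ≤ 5 * Cu * A ^ (m + 1) * A ^ n * (2 * ∫⁻ x in W, V x) := by gcongr
    _ = 10 * Cu * A ^ (m + 1) * (A ^ n * ∫⁻ x in W, V x) := by ring
    _ ≤ 10 * Cu * A ^ (m + 1) * (5 * Cv * A * ∫⁻ x in W, G x) := by gcongr
    _ = _ := by rw [hAm]; ring

lemma swap4 {α β γ δ : Type*} (f : α → β → γ → δ → ℝ≥0∞) :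
    ∑' a, ∑' b, ∑' c, ∑' d, f a b c d = ∑' c, ∑' d, ∑' a, ∑' b, f a b c d := by
  calc ∑' a, ∑' b, ∑' c, ∑' d, f a b c d = ∑' a, ∑' c, ∑' b, ∑' d, f a b c d :=
        tsum_congr fun a => ENNReal.tsum_comm
    _ = ∑' c, ∑' a, ∑' b, ∑' d, f a b c d := ENNReal.tsum_comm
    _ = ∑' c, ∑' a, ∑' d, ∑' b, f a b c d :=
        tsum_congr fun c => tsum_congr fun a => ENNReal.tsum_comm
    _ = _ := tsum_congr fun c => ENNReal.tsum_comm

lemma sum_m {U G : ℝ → ℝ≥0∞} {Cu A : ℝ≥0∞} (hU : A1W U Cu) (hG : AEMeasurable G volume)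
    (hA : 2 ≤ A) (hAt : A ≠ ⊤) (W : ℤ → Set ℝ) (hW : ∀ m, MeasurableSet (W m))
    (h : ∀ m, ∀ᵐ x ∂(volume : Measure ℝ), x ∈ W m → A ^ m < U x) :
    ∑' m : ℤ, A ^ m * ∫⁻ x in W m, G x ≤ 2 * ∫⁻ x, G x * U x := by
  have h' := ae_all_iff.2 h
  calc ∑' m : ℤ, A ^ m * ∫⁻ x in W m, G x
      = ∑' m : ℤ, ∫⁻ x, (W m).indicator (fun x => A ^ m * G x) x := by
        congr 1; ext m
        rw [lintegral_indicator (hW m), lintegral_const_mul'' _ hG.restrict]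
    _ = ∫⁻ x, ∑' m : ℤ, (W m).indicator (fun x => A ^ m * G x) x := by
        rw [lintegral_tsum]
        intro m
        exact (hG.const_mul _).indicator (hW m)
    _ ≤ ∫⁻ x, 2 * (G x * U x) := by
        apply lintegral_mono_ae
        filter_upwards [h'] with x hx
        calc ∑' m : ℤ, (W m).indicator (fun x => A ^ m * G x) x
            ≤ ∑' m : ℤ, G x * (if A ^ m < U x then A ^ m else 0) := by
              apply ENNReal.tsum_le_tsum
              intro m
              by_cases hm : x ∈ W m
              · rw [indicator_of_mem hm, if_pos (hx m hm), mul_comm]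
              · rw [indicator_of_notMem hm]; exact zero_le
          _ = G x * ∑' m : ℤ, (if A ^ m < U x then A ^ m else 0) := ENNReal.tsum_mul_left
          _ ≤ G x * (2 * U x) := by gcongr; exact geom hA hAt _ (hU.fin x)
          _ = _ := by ring
    _ = _ := lintegral_const_mul'' _ (hG.mul hU.meas.aemeasurable)

lemma core {U V G : ℝ → ℝ≥0∞} {Cu Cv A g : ℝ≥0∞} (hU : A1W U Cu) (hV : A1W V Cv)
    (hG : AEMeasurable G volume) (hCu : Cu ≠ ⊤) (hCv : Cv ≠ ⊤) (hCv1 : 1 ≤ Cv)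
    (hAdef : A = 4 * Cv) (hgdef : g = 10 * Cu / (1 + 10 * Cu)) (R : ℝ) :
    ∫⁻ x in {x | ∃ p : ℝ × ℝ, 0 < p.2 ∧ p.2 ≤ R ∧ x ∈ closedBall p.1 p.2 ∧
        V x * volume (closedBall p.1 p.2) < ∫⁻ y in closedBall p.1 p.2, G y}, U x * V x ≤
      (∑' n : ℕ, A * g ^ (n - 1)) * (50 * Cu * Cv * A ^ 2 * 2) * ∫⁻ x, G x * U x := by
  have hA : 2 ≤ A := by
    rw [hAdef]
    calc (2 : ℝ≥0∞) ≤ 4 * 1 := by norm_num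
      _ ≤ 4 * Cv := by gcongr
  have hAt : A ≠ ⊤ := by rw [hAdef]; exact ENNReal.mul_ne_top (by simp) hCv
  have hA0 : A ≠ 0 := by intro h; simp [h] at hA
  have hA1 : 1 < A := lt_of_lt_of_le (by norm_num) hA
  set E : Set ℝ := {x | ∃ p : ℝ × ℝ, 0 < p.2 ∧ p.2 ≤ R ∧ x ∈ closedBall p.1 p.2 ∧
        V x * volume (closedBall p.1 p.2) < ∫⁻ y in closedBall p.1 p.2, G y} with hE
  set T : ℤ → Set ℝ := fun k => {x | A ^ k < V x ∧ V x ≤ A ^ (k + 1)} with hT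
  have hTm : ∀ k, MeasurableSet (T k) := fun k =>
    (measurableSet_lt measurable_const hV.meas).inter (measurableSet_le hV.meas measurable_const)
  have hvit : ∀ k : ℤ, ∃ s ⊆ {p : ℝ × ℝ | 0 < p.2 ∧ p.2 ≤ R ∧
      A ^ k * volume (closedBall p.1 p.2) ≤ ∫⁻ y in closedBall p.1 p.2, G y},
      (s.PairwiseDisjoint fun p => closedBall p.1 p.2) ∧ s.Countable ∧
      ∀ p ∈ {p : ℝ × ℝ | 0 < p.2 ∧ p.2 ≤ R ∧
      A ^ k * volume (closedBall p.1 p.2) ≤ ∫⁻ y in closedBall p.1 p.2, G y},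
        ∃ q ∈ s, closedBall p.1 p.2 ⊆ closedBall q.1 (5 * q.2) := fun k =>
    vitali5 (R := R) (fun p hp => hp.2.1) (fun p hp => hp.1)
  choose s hst hsd hsc hcov using hvit
  set S : ℕ → ℤ → ℤ → Set (ℝ × ℝ) := fun n m k => {p | p ∈ s k ∧
    A ^ (k - n) < essInf V (volume.restrict (closedBall p.1 (5 * p.2))) ∧
    essInf V (volume.restrict (closedBall p.1 (5 * p.2))) ≤ A ^ (k - n + 1) ∧
    A ^ m < essInf U (volume.restrict (closedBall p.1 (5 * p.2))) ∧
    essInf U (volume.restrict (closedBall p.1 (5 * p.2))) ≤ A ^ (m + 1)} with hS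
  have hSs : ∀ n m k, S n m k ⊆ s k := fun n m k p hp => hp.1
  set F : ℕ → ℤ → (ℝ × ℝ) → ℝ≥0∞ := fun n k p =>
    A * g ^ (n - 1) * (A ^ k * ∫⁻ x in closedBall p.1 (5 * p.2), U x) with hF
  -- covering
  have step1 : ∫⁻ x in E, U x * V x ≤
      ∑' k : ℤ, ∑' p : s k, A ^ (k + 1) * ∫⁻ x in closedBall p.1.1 (5 * p.1.2) ∩ T k, U x := by
    calc ∫⁻ x in E, U x * V x ≤ ∫⁻ x in ⋃ k, ⋃ p ∈ s k, closedBall p.1 (5 * p.2) ∩ T k, U x * V x := by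
          apply lintegral_mono_set'
          filter_upwards [hV.pos] with x hx0 hxE
          obtain ⟨k, hk1, hk2⟩ := ENNReal.exists_mem_Ioc_zpow hx0.ne' (hV.fin x) hA1 hAt
          obtain ⟨p, h1, h2, h3, h4⟩ := hxE
          obtain ⟨q, hq, hq'⟩ := hcov k p ⟨h1, h2, le_trans (by gcongr) h4.le⟩
          exact mem_iUnion.2 ⟨k, mem_biUnion hq ⟨hq' h3, hk1, hk2⟩⟩
      _ ≤ ∑' k, ∫⁻ x in ⋃ p ∈ s k, closedBall p.1 (5 * p.2) ∩ T k, U x * V x :=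
          lintegral_iUnion_le _ _
      _ ≤ ∑' k, ∑' p : s k, ∫⁻ x in closedBall p.1.1 (5 * p.1.2) ∩ T k, U x * V x :=
          ENNReal.tsum_le_tsum fun k => setLIntegral_biUnion_le (hsc k) _ _
      _ ≤ _ := by
          refine ENNReal.tsum_le_tsum fun k => ENNReal.tsum_le_tsum fun p => ?_
          rw [← lintegral_const_mul _ hU.meas]
          apply setLIntegral_mono' (measurableSet_closedBall.inter (hTm k))
          intro x hx
          have : V x ≤ A ^ (k + 1) := hx.2.2
          rw [mul_comm]
          gcongr
  -- classification
  have step2 : ∀ k, ∀ p ∈ s k,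
      A ^ (k + 1) * ∫⁻ x in closedBall p.1 (5 * p.2) ∩ T k, U x ≤
        ∑' n : ℕ, ∑' m : ℤ, (S n m k).indicator (F n k) p := by
    intro k p hp
    have hp0 : 0 < p.2 := (hst k hp).1
    have hp5 : 0 < 5 * p.2 := by linarith
    by_cases hz : ∫⁻ x in closedBall p.1 (5 * p.2) ∩ T k, U x = 0
    · rw [hz, mul_zero]; exact zero_le
    have hι : essInf V (volume.restrict (closedBall p.1 (5 * p.2))) ≤ A ^ (k + 1) := by
      by_contra hcon
      rw [not_le] at hcon
      apply hz
      apply setLIntegral_measure_zero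
      have := ae_iota V p.1 (5 * p.2)
      rw [measure_eq_zero_iff_ae_notMem]
      filter_upwards [this] with x hx hxm
      have h2 : V x ≤ A ^ (k + 1) := hxm.2.2
      exact absurd (hcon.trans_le (hx hxm.1)) (not_lt.2 h2)
    obtain ⟨j, hj1, hj2⟩ := ENNReal.exists_mem_Ioc_zpow (hV.iota_pos hp5 (c := p.1)).ne'
      (hV.iota_fin hp5) hA1 hAt
    obtain ⟨m, hm1, hm2⟩ := ENNReal.exists_mem_Ioc_zpow (hU.iota_pos hp5 (c := p.1)).ne'
      (hU.iota_fin hp5) hA1 hAt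
    have hjk : j ≤ k := by
      by_contra h
      have h2 : A ^ (k + 1) ≤ A ^ j := ENNReal.zpow_le_of_le hA1.le (by omega)
      exact absurd (hj1.trans_le (hι.trans h2)) (lt_irrefl _)
    obtain ⟨n, hn⟩ := Int.eq_ofNat_of_zero_le (show 0 ≤ k - j by omega)
    have hjn : j = k - n := by omega
    subst hjn
    refine le_trans ?_ (ENNReal.le_tsum n)
    refine le_trans ?_ (ENNReal.le_tsum m)
    rw [indicator_of_mem (show p ∈ S n m k from ⟨hp, hj1, hj2, hm1, hm2⟩)]
    have hdec := decay hU hV (c := p.1) hp5 hCu hCv hCv1 (n - 1)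
    rw [← hAdef, ← hgdef] at hdec
    have hsub : ∫⁻ x in closedBall p.1 (5 * p.2) ∩ T k, U x ≤
        g ^ (n - 1) * ∫⁻ x in closedBall p.1 (5 * p.2), U x := by
      rcases Nat.eq_zero_or_pos n with h0 | h0
      · subst h0
        simp only [zero_le, Nat.sub_eq_zero_of_le, pow_zero, one_mul]
        exact lintegral_mono_set inter_subset_left
      · refine le_trans (lintegral_mono_set ?_) hdec
        rintro x ⟨hx1, hx2, hx3⟩
        refine ⟨hx1, ?_⟩
        show A ^ (n - 1) * _ < V x
        refine lt_of_le_of_lt ?_ hx2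
        calc A ^ (n - 1) * essInf V (volume.restrict (closedBall p.1 (5 * p.2)))
            ≤ A ^ (n - 1) * A ^ (k - n + 1) := by gcongr
          _ = A ^ k := by
            rw [← zpow_natCast, ← ENNReal.zpow_add hA0 hAt]; congr 1; omega
    calc _ ≤ A ^ (k + 1) * (g ^ (n - 1) * ∫⁻ x in closedBall p.1 (5 * p.2), U x) := by gcongr
      _ = F n k p := by
        simp only [hF]; rw [ENNReal.zpow_add hA0 hAt, zpow_one]; ring
  have step3 : ∫⁻ x in E, U x * V x ≤
      ∑' n : ℕ, ∑' m : ℤ, ∑' k : ℤ, ∑' p : S n m k, F n k p := by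
    calc _ ≤ _ := step1
      _ ≤ ∑' k : ℤ, ∑' p : s k, ∑' n : ℕ, ∑' m : ℤ, (S n m k).indicator (F n k) p :=
          ENNReal.tsum_le_tsum fun k => ENNReal.tsum_le_tsum fun p => step2 k p.1 p.2
      _ ≤ ∑' k : ℤ, ∑' p : ℝ × ℝ, ∑' n : ℕ, ∑' m : ℤ, (S n m k).indicator (F n k) p :=
          ENNReal.tsum_le_tsum fun k =>
            ENNReal.tsum_comp_le_tsum_of_injective Subtype.val_injective
              (fun p : ℝ × ℝ => ∑' n : ℕ, ∑' m : ℤ, (S n m k).indicator (F n k) p)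
      _ = ∑' n : ℕ, ∑' m : ℤ, ∑' k : ℤ, ∑' p : ℝ × ℝ, (S n m k).indicator (F n k) p :=
          swap4 (fun k p n m => (S n m k).indicator (F n k) p)
      _ = _ := by
          refine tsum_congr fun n => tsum_congr fun m => tsum_congr fun k => ?_
          rw [tsum_subtype]
  have step4 : ∀ n : ℕ, ∑' m : ℤ, ∑' k : ℤ, ∑' p : S n m k, F n k p ≤
      A * g ^ (n - 1) * ((50 * Cu * Cv * A ^ 2 * 2) * ∫⁻ x, G x * U x) := by
    intro n
    set W : ℤ → Set ℝ := fun m => ⋃ k, ⋃ p ∈ S n m k, closedBall p.1 p.2 with hW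
    have hSc : ∀ m k, (S n m k).Countable := fun m k => (hsc k).mono (hSs n m k)
    have hWm : ∀ m, MeasurableSet (W m) := fun m => MeasurableSet.iUnion fun k =>
      MeasurableSet.biUnion (hSc m k) fun p _ => measurableSet_closedBall
    have hWU : ∀ m, ∀ᵐ x ∂(volume : Measure ℝ), x ∈ W m → A ^ m < U x := by
      intro m
      have : ∀ᵐ x ∂(volume : Measure ℝ), ∀ k, ∀ p ∈ S n m k,
          x ∈ closedBall p.1 p.2 → A ^ m < U x := by
        rw [ae_all_iff]
        intro k
        rw [ae_ball_iff (hSc m k)]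
        intro p hp
        filter_upwards [ae_iota U p.1 (5 * p.2)] with x hx hxp
        exact hp.2.2.2.1.trans_le
          (hx (closedBall_subset_closedBall (by linarith [(hst k hp.1).1]) hxp))
      filter_upwards [this] with x hx hxW
      obtain ⟨k, hk⟩ := mem_iUnion.1 hxW
      obtain ⟨p, hp, hxp⟩ := mem_iUnion₂.1 hk
      exact hx k p hp hxp
    calc ∑' m : ℤ, ∑' k : ℤ, ∑' p : S n m k, F n k p
        = A * g ^ (n - 1) * ∑' m : ℤ, ∑' k : ℤ, ∑' p : S n m k,
            A ^ k * ∫⁻ x in closedBall p.1.1 (5 * p.1.2), U x := by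
          simp only [hF, ENNReal.tsum_mul_left]
      _ ≤ A * g ^ (n - 1) * ∑' m : ℤ, 50 * Cu * Cv * A ^ 2 * (A ^ m * ∫⁻ x in W m, G x) := by
          gcongr with m
          exact class_bound hU hV hA hAt R n m (S n m)
            (fun k p hp => (hst k hp.1).1) (fun k p hp => (hst k hp.1).2.1)
            (fun k p hp => (hst k hp.1).2.2) (fun k => (hsd k).subset (hSs n m k))
            (fun k p hp => hp.2.1) (fun k p hp => hp.2.2.1) (fun k p hp => hp.2.2.2.2)
      _ = A * g ^ (n - 1) * (50 * Cu * Cv * A ^ 2 * ∑' m : ℤ, (A ^ m * ∫⁻ x in W m, G x)) := by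
          rw [ENNReal.tsum_mul_left]
      _ ≤ A * g ^ (n - 1) * (50 * Cu * Cv * A ^ 2 * (2 * ∫⁻ x, G x * U x)) := by
          gcongr; exact sum_m hU hG hA hAt W hWm hWU
      _ = _ := by ring
  calc _ ≤ _ := step3
    _ ≤ ∑' n : ℕ, A * g ^ (n - 1) * ((50 * Cu * Cv * A ^ 2 * 2) * ∫⁻ x, G x * U x) :=
        ENNReal.tsum_le_tsum step4
    _ = _ := by rw [ENNReal.tsum_mul_right]; ring

lemma core' {U V G : ℝ → ℝ≥0∞} {Cu Cv A g : ℝ≥0∞} (hU : A1W U Cu) (hV : A1W V Cv)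
    (hG : AEMeasurable G volume) (hCu : Cu ≠ ⊤) (hCv : Cv ≠ ⊤) (hCv1 : 1 ≤ Cv)
    (hAdef : A = 4 * Cv) (hgdef : g = 10 * Cu / (1 + 10 * Cu)) :
    ∫⁻ x in {x | ∃ p : ℝ × ℝ, 0 < p.2 ∧ x ∈ closedBall p.1 p.2 ∧
        V x * volume (closedBall p.1 p.2) < ∫⁻ y in closedBall p.1 p.2, G y}, U x * V x ≤
      (∑' n : ℕ, A * g ^ (n - 1)) * (50 * Cu * Cv * A ^ 2 * 2) * ∫⁻ x, G x * U x := by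
  set E : ℕ → Set ℝ := fun N => {x | ∃ p : ℝ × ℝ, 0 < p.2 ∧ p.2 ≤ (N : ℝ) ∧ x ∈ closedBall p.1 p.2 ∧
        V x * volume (closedBall p.1 p.2) < ∫⁻ y in closedBall p.1 p.2, G y} with hE
  have hmono : Monotone E := by
    rintro a b hab x ⟨p, h1, h2, h3⟩
    exact ⟨p, h1, h2.trans (by exact_mod_cast hab), h3⟩
  calc _ ≤ ∫⁻ x in ⋃ N, E N, U x * V x := by
        apply lintegral_mono_set
        rintro x ⟨p, h1, h2⟩
        obtain ⟨N, hN⟩ := exists_nat_ge p.2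
        exact mem_iUnion.2 ⟨N, p, h1, hN, h2⟩
    _ = ⨆ N, ∫⁻ x in E N, U x * V x := setLIntegral_iUnion_of_directed _ hmono.directed_le
    _ ≤ _ := iSup_le fun N => core hU hV hG hCu hCv hCv1 hAdef hgdef N

lemma const_fin {A g Cu : ℝ≥0∞} (hA : A ≠ ⊤) (hCu : Cu ≠ ⊤)
    (hgdef : g = 10 * Cu / (1 + 10 * Cu)) : ∑' n : ℕ, A * g ^ (n - 1) ≠ ⊤ := by
  have hK : 10 * Cu ≠ ⊤ := ENNReal.mul_ne_top (by simp) hCu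
  have hg : g < 1 := by
    rw [hgdef, ENNReal.div_lt_iff (by simp) (by simp [hK]), one_mul, add_comm]
    exact ENNReal.lt_add_right hK (by simp)
  rw [ENNReal.tsum_mul_left, tsum_eq_zero_add' ENNReal.summable]
  simp only [add_tsub_cancel_right, ENNReal.tsum_geometric]
  refine ENNReal.mul_ne_top hA (ENNReal.add_ne_top.2 ⟨by simp, ?_⟩)
  rw [ENNReal.inv_ne_top]
  exact (tsub_pos_of_lt hg).ne'

lemma toA1W {w : ℝ → ℝ} {C : ℝ≥0∞} (hw : IsWeightR w) (h : A1ConstR w C) :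
    A1W (fun x => ENNReal.ofReal (w x)) (max C 1) := by
  obtain ⟨h1, h2, h3, h4⟩ := hw
  have hcube : ∀ c r : ℝ, 0 < r → IsCubeR (closedBall c r) := fun c r hr =>
    ⟨c - r, 2 * r, by linarith, by rw [Real.closedBall_eq_Icc]; congr 1; ring⟩
  refine ⟨h1.ennreal_ofReal, fun x => ENNReal.ofReal_ne_top, ?_, ?_, ?_⟩
  · filter_upwards [h3] with x hx; simpa using hx
  · intro c r hr; exact (h4 _ (hcube c r hr)).ne
  · intro c r hr
    have := h _ (hcube c r hr)
    unfold wMeasR at this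
    set B := closedBall c r
    have hB0 : volume B ≠ 0 := vol_pos hr
    have hBt : volume B ≠ ⊤ := vol_fin
    set I := ∫⁻ x in B, ENNReal.ofReal (w x)
    set e := essInf (fun x => ENNReal.ofReal (w x)) (volume.restrict B)
    calc I = volume B * ((volume B)⁻¹ * I) := by
          rw [← mul_assoc, ENNReal.mul_inv_cancel hB0 hBt, one_mul]
      _ ≤ volume B * (C * e) := by gcongr
      _ ≤ volume B * (max C 1 * e) := by gcongr; exact le_max_left _ _
      _ = _ := by ring

/-- **Sawyer's mixed weak-type inequality.**  If `u, v ∈ A₁` (on `ℝ`), then there is a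
constant `C` depending only on `[u]_{A₁}` and `[v]_{A₁}` such that for every locally
integrable `f` and every `t > 0`,
`uv({x : M(fv)(x)/v(x) > t}) ≤ (C/t) ∫ |f| u v`. -/
theorem sawyer_mixed_weak_type (Cu Cv : ℝ≥0∞) (hCu : Cu < ⊤) (hCv : Cv < ⊤) :
    ∃ C : ℝ≥0∞, C < ⊤ ∧
      ∀ u v : ℝ → ℝ, IsWeightR u → IsWeightR v → A1ConstR u Cu → A1ConstR v Cv →
        ∀ f : ℝ → ℝ, LocallyIntegrable f volume → ∀ t : ℝ, 0 < t →
          wMeasR (fun x => u x * v x)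
              {x : ℝ | ENNReal.ofReal t < maxFnR (fun y => f y * v y) x / ENNReal.ofReal (v x)}
            ≤ (C / ENNReal.ofReal t) * ∫⁻ x, ENNReal.ofReal (|f x| * u x * v x) := by


  have hu1 : max Cu 1 ≠ ⊤ := (max_lt hCu (by simp)).ne
  have hv1 : max Cv 1 ≠ ⊤ := (max_lt hCv (by simp)).ne
  refine ⟨(∑' n : ℕ, (4 * max Cv 1) * (10 * max Cu 1 / (1 + 10 * max Cu 1)) ^ (n - 1)) *
    (50 * max Cu 1 * max Cv 1 * (4 * max Cv 1) ^ 2 * 2), ?_, ?_⟩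
  · have h4 : 4 * max Cv 1 ≠ ⊤ := ENNReal.mul_ne_top (by simp) hv1
    refine (ENNReal.mul_ne_top (const_fin h4 hu1 rfl) ?_).lt_top
    refine ENNReal.mul_ne_top (ENNReal.mul_ne_top (ENNReal.mul_ne_top (ENNReal.mul_ne_top
      (by simp) hu1) hv1) (ENNReal.pow_ne_top h4)) (by simp)
  intro u v hu hv hAu hAv f hf t ht
  have ht0 : ENNReal.ofReal t ≠ 0 := by simpa using ht
  have htt : ENNReal.ofReal t ≠ ⊤ := ENNReal.ofReal_ne_top
  have hfm : AEMeasurable f volume := hf.aestronglyMeasurable.aemeasurable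
  set G : ℝ → ℝ≥0∞ := fun y => (ENNReal.ofReal t)⁻¹ * ENNReal.ofReal |f y * v y| with hG
  have hG0 : AEMeasurable (fun y => ENNReal.ofReal |f y * v y|) volume := by
    have : AEMeasurable (fun y => |f y * v y|) volume :=
      measurable_norm.comp_aemeasurable (hfm.mul hv.1.aemeasurable)
    exact this.ennreal_ofReal
  have hGm : AEMeasurable G volume := hG0.const_mul _
  have key := core' (toA1W hu hAu) (toA1W hv hAv) hGm hu1 hv1 (le_max_right _ _) rfl rfl
  set K := (∑' n : ℕ, (4 * max Cv 1) * (10 * max Cu 1 / (1 + 10 * max Cu 1)) ^ (n - 1)) *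
    (50 * max Cu 1 * max Cv 1 * (4 * max Cv 1) ^ 2 * 2) with hK
  have hR : ∫⁻ x, G x * ENNReal.ofReal (u x) =
      (ENNReal.ofReal t)⁻¹ * ∫⁻ x, ENNReal.ofReal (|f x| * u x * v x) := by
    rw [← lintegral_const_mul' _ _ (by simpa using ht)]
    congr 1; ext x
    simp only [hG]
    rw [mul_assoc, ← ENNReal.ofReal_mul (abs_nonneg _), abs_mul, abs_of_nonneg (hv.2.1 x)]
    congr 2; ring
  have hL : wMeasR (fun x => u x * v x)
      {x : ℝ | ENNReal.ofReal t < maxFnR (fun y => f y * v y) x / ENNReal.ofReal (v x)} ≤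
      ∫⁻ x in {x | ∃ p : ℝ × ℝ, 0 < p.2 ∧ x ∈ closedBall p.1 p.2 ∧
        ENNReal.ofReal (v x) * volume (closedBall p.1 p.2) < ∫⁻ y in closedBall p.1 p.2, G y},
        ENNReal.ofReal (u x) * ENNReal.ofReal (v x) := by
    unfold wMeasR
    simp_rw [fun x => ENNReal.ofReal_mul (q := v x) (hu.2.1 x)]
    apply lintegral_mono_set
    intro x hx
    have hx1 : ENNReal.ofReal t * ENNReal.ofReal (v x) < maxFnR (fun y => f y * v y) x :=
      ENNReal.mul_lt_of_lt_div hx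
    unfold maxFnR at hx1
    simp only [lt_iSup_iff] at hx1
    obtain ⟨Q, ⟨a, h, hh, rfl⟩, hxQ, hx2⟩ := hx1
    have hQ : Set.Icc a (a + h) = closedBall (a + h / 2) (h / 2) := by
      rw [Real.closedBall_eq_Icc]; congr 1 <;> ring
    rw [hQ] at hxQ hx2
    refine ⟨(a + h / 2, h / 2), by simpa using hh, hxQ, ?_⟩
    have hB0 : volume (closedBall (a + h / 2) (h / 2)) ≠ 0 := vol_pos (by linarith)
    have hBt : volume (closedBall (a + h / 2) (h / 2)) ≠ ⊤ := vol_fin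
    show ENNReal.ofReal (v x) * volume (closedBall (a + h / 2) (h / 2)) <
      ∫⁻ y in closedBall (a + h / 2) (h / 2), (ENNReal.ofReal t)⁻¹ * ENNReal.ofReal |f y * v y|
    rw [lintegral_const_mul' _ _ (by simpa using ht)]
    rw [mul_comm _ (∫⁻ y in _, _), ← div_eq_mul_inv] at hx2 ⊢
    rw [ENNReal.lt_div_iff_mul_lt (Or.inl ht0) (Or.inl htt)]
    rw [ENNReal.lt_div_iff_mul_lt (Or.inl hB0) (Or.inl hBt)] at hx2
    refine lt_of_eq_of_lt ?_ hx2
    ring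
  refine hL.trans (key.trans ?_)
  rw [hR, div_eq_mul_inv]
  exact (mul_assoc _ _ _).symm.le

end
end

section
/- (Cruz-Uribe–Martell–Pérez extension of Sawyer's inequality to ℝ^n) Let u and v be weights on ℝ^n with u ∈ A_1 and v ∈ A_1. Then there exists a constant C such that for every locally integrable function f on ℝ^n and every t > 0, uv({x ∈ ℝ^n : M(fv)(x)/v(x) > t}) ≤ (C/t) ∫_{ℝ^n} |f(x)| u(x) v(x) dx, where uv denotes the weight u·v. -/
open MeasureTheory ENNReal Set

noncomputable section

/-- Euclidean space `ℝ^n`. -/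
abbrev ESp (n : ℕ) := EuclideanSpace ℝ (Fin n)

/-- An axis-parallel cube with positive finite side length. -/
def IsCube {n : ℕ} (Q : Set (ESp n)) : Prop :=
  ∃ (c : Fin n → ℝ) (h : ℝ), 0 < h ∧ Q = {x : ESp n | ∀ i, c i ≤ x i ∧ x i ≤ c i + h}

/-- The measure `w(E) = ∫_E w` associated to a weight `w`. -/
def wMeas {n : ℕ} (w : ESp n → ℝ) (E : Set (ESp n)) : ℝ≥0∞ :=
  ∫⁻ x in E, ENNReal.ofReal (w x)

/-- A weight: a nonnegative locally integrable function, positive (and finite) a.e. -/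
def IsWeight {n : ℕ} (w : ESp n → ℝ) : Prop :=
  Measurable w ∧ (∀ x, 0 ≤ w x) ∧ (∀ᵐ x ∂(volume : Measure (ESp n)), 0 < w x) ∧
    ∀ Q : Set (ESp n), IsCube Q → wMeas w Q < ⊤

/-- `C` is an admissible `A₁` constant for `w`. -/
def A1Const {n : ℕ} (w : ESp n → ℝ) (C : ℝ≥0∞) : Prop :=
  ∀ Q : Set (ESp n), IsCube Q →
    (volume Q)⁻¹ * wMeas w Q ≤ C * essInf (fun x => ENNReal.ofReal (w x)) (volume.restrict Q)

/-- The Muckenhoupt class `A₁`. -/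
def IsA1 {n : ℕ} (w : ESp n → ℝ) : Prop := ∃ C : ℝ≥0∞, C < ⊤ ∧ A1Const w C

/-- The Muckenhoupt class `A_p`, `1 < p < ∞`. -/
def IsAp {n : ℕ} (w : ESp n → ℝ) (p : ℝ) : Prop :=
  ∃ C : ℝ≥0∞, C < ⊤ ∧ ∀ Q : Set (ESp n), IsCube Q →
    ((volume Q)⁻¹ * wMeas w Q) *
      ((volume Q)⁻¹ * ∫⁻ x in Q, ENNReal.ofReal (w x) ^ (1 - p / (p - 1))) ^ (p - 1) ≤ C

/-- The class `A_∞ = ⋃_{p ≥ 1} A_p`. -/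
def IsAinfty {n : ℕ} (w : ESp n → ℝ) : Prop :=
  IsA1 w ∨ ∃ p : ℝ, 1 < p ∧ IsAp w p

/-- The Hardy–Littlewood maximal function (over cubes). -/
def maxFn {n : ℕ} (f : ESp n → ℝ) (x : ESp n) : ℝ≥0∞ :=
  ⨆ (Q : Set (ESp n)) (_ : IsCube Q) (_ : x ∈ Q),
    (volume Q)⁻¹ * ∫⁻ y in Q, ENNReal.ofReal |f y|

/-- The Fujii–Wilson `A_∞` constant. -/
def FW {n : ℕ} (w : ESp n → ℝ) : ℝ≥0∞ :=
  ⨆ (Q : Set (ESp n)) (_ : IsCube Q),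
    (wMeas w Q)⁻¹ * ∫⁻ x in Q, maxFn (Q.indicator w) x

/-- The weighted weak `L^{q,∞}(w)` quasinorm of `g`. -/
def wnorm {n : ℕ} (g : ESp n → ℝ≥0∞) (q : ℝ) (w : ESp n → ℝ) : ℝ≥0∞ :=
  ⨆ (t : ℝ) (_ : 0 < t), ENNReal.ofReal t * (wMeas w {x | ENNReal.ofReal t < g x}) ^ (1 / q)

/-- The weighted `L¹(w)` norm. -/
def L1norm {n : ℕ} (f : ESp n → ℝ) (w : ESp n → ℝ) : ℝ≥0∞ :=
  ∫⁻ x, ENNReal.ofReal (|f x| * w x)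

/-- The fractional maximal operator `M_α`. -/
def fracM {n : ℕ} (α : ℝ) (f : ESp n → ℝ) (x : ESp n) : ℝ≥0∞ :=
  ⨆ (Q : Set (ESp n)) (_ : IsCube Q) (_ : x ∈ Q),
    ((volume Q) ^ (1 - α / (n : ℝ)))⁻¹ * ∫⁻ y in Q, ENNReal.ofReal |f y|

/-- The fractional integral (Riesz potential) `I_α`. -/
def fracI {n : ℕ} (α : ℝ) (f : ESp n → ℝ) (x : ESp n) : ℝ :=
  ∫ y, f y / dist x y ^ ((n : ℝ) - α)

/-- The multi(sub)linear maximal function `𝓜`. -/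
def multiM {n m : ℕ} (f : Fin m → ESp n → ℝ) (x : ESp n) : ℝ≥0∞ :=
  ⨆ (Q : Set (ESp n)) (_ : IsCube Q) (_ : x ∈ Q),
    ∏ i, (volume Q)⁻¹ * ∫⁻ y in Q, ENNReal.ofReal |f i y|

/-- The multi(sub)linear fractional maximal operator `𝓜_α`. -/
def multiMα {n m : ℕ} (α : ℝ) (f : Fin m → ESp n → ℝ) (x : ESp n) : ℝ≥0∞ :=
  ⨆ (Q : Set (ESp n)) (_ : IsCube Q) (_ : x ∈ Q),
    ∏ i, ((volume Q) ^ (1 - α / ((m : ℝ) * (n : ℝ))))⁻¹ * ∫⁻ y in Q, ENNReal.ofReal |f i y|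

/-- The multilinear fractional integral `𝓘_α`. -/
def multiIα {n m : ℕ} (α : ℝ) (f : Fin m → ESp n → ℝ) (x : ESp n) : ℝ :=
  ∫ y : Fin m → ESp n, (∏ i, f i (y i)) / (∑ i, dist x (y i)) ^ ((m : ℝ) * (n : ℝ) - α)

/-- The multilinear class `A_{(1,…,1)}`. -/
def A11 {n m : ℕ} (w : Fin m → ESp n → ℝ) : Prop :=
  ∃ C : ℝ≥0∞, C < ⊤ ∧ ∀ Q : Set (ESp n), IsCube Q →
    ((volume Q)⁻¹ * ∫⁻ x in Q, ENNReal.ofReal (∏ i, w i x ^ ((m : ℝ)⁻¹))) ^ (m : ℝ) *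
      ∏ i, (essInf (fun x => ENNReal.ofReal (w i x)) (volume.restrict Q))⁻¹ ≤ C


/-- Pointwise-a.e. form of the `A₁` condition together with the weight properties, on `Fin n → ℝ`
with the sup metric (so that closed balls are cubes). -/
structure GoodW {n : ℕ} (w : (Fin n → ℝ) → ℝ≥0∞) (C : ℝ≥0∞) : Prop where
  meas : Measurable w
  fin : ∀ x, w x ≠ ⊤
  pos : ∀ᵐ x, 0 < w x
  loc : ∀ x r, 0 < r → ∫⁻ z in Metric.closedBall x r, w z ≠ ⊤
  a1 : ∀ x r, 0 < r → ∀ᵐ y, y ∈ Metric.closedBall x r →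
    ∫⁻ z in Metric.closedBall x r, w z ≤ C * volume (Metric.closedBall x r) * w y

theorem vol_mul {n : ℕ} (x y : Fin n → ℝ) (c r : ℝ) (hc : 0 ≤ c) (hr : 0 ≤ r) :
    volume (Metric.closedBall x (c * r)) =
      ENNReal.ofReal c ^ n * volume (Metric.closedBall y r) := by
  rw [Real.volume_pi_closedBall _ (by positivity), Real.volume_pi_closedBall _ hr,
    ← ENNReal.ofReal_pow hc, ← ENNReal.ofReal_mul (by positivity)]
  congr 1
  simp only [Fintype.card_fin]
  rw [← mul_pow]; ring

theorem vol_ne_top {n : ℕ} (x : Fin n → ℝ) (r : ℝ) : volume (Metric.closedBall x r) ≠ ⊤ :=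
  measure_closedBall_lt_top.ne

theorem vol_ne_zero {n : ℕ} (x : Fin n → ℝ) (r : ℝ) (hr : 0 < r) :
    volume (Metric.closedBall x r) ≠ 0 :=
  (Metric.measure_closedBall_pos _ _ hr).ne'

theorem GoodW.doubling {n : ℕ} {w : (Fin n → ℝ) → ℝ≥0∞} {C : ℝ≥0∞} (hw : GoodW w C)
    (x : Fin n → ℝ) (r : ℝ) (hr : 0 < r) :
    ∫⁻ z in Metric.closedBall x (5 * r), w z ≤
      C * 5 ^ n * ∫⁻ z in Metric.closedBall x r, w z := by
  have h1 : ∫⁻ y in Metric.closedBall x r, (∫⁻ z in Metric.closedBall x (5 * r), w z) ≤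
      ∫⁻ y in Metric.closedBall x r, C * volume (Metric.closedBall x (5 * r)) * w y := by
    apply lintegral_mono_ae
    rw [ae_restrict_iff' Metric.isClosed_closedBall.measurableSet]
    filter_upwards [hw.a1 x (5 * r) (by positivity)] with y hy hy'
    exact hy (Metric.closedBall_subset_closedBall (by linarith) hy')
  rw [lintegral_const, lintegral_const_mul _ hw.meas, Measure.restrict_apply_univ,
    vol_mul x x 5 r (by norm_num) hr.le] at h1
  have h5 : ENNReal.ofReal 5 = 5 := by norm_num
  rw [h5] at h1
  rw [← ENNReal.mul_le_mul_iff_left (vol_ne_zero x r hr) (vol_ne_top x r)]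
  refine h1.trans (le_of_eq ?_)
  ring

theorem geh_cubes {n : ℕ} {w : (Fin n → ℝ) → ℝ≥0∞} {C : ℝ≥0∞} (hw : GoodW w C)
    (x0 : Fin n → ℝ) (R : ℝ) (hR : 0 < R) (lam : ℝ≥0∞)
    (h : ∫⁻ z in Metric.closedBall x0 R, w z ≤ lam * volume (Metric.closedBall x0 R)) :
    ∀ᵐ y, y ∈ Metric.closedBall x0 R → lam < w y →
      ∃ θ : ℝ, 0 < θ ∧ θ ≤ 1 ∧ y ∈ Metric.closedBall (y + θ • (x0 - y)) (θ * R) ∧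
        Metric.closedBall (y + θ • (x0 - y)) (θ * R) ⊆ Metric.closedBall x0 R ∧
        lam * volume (Metric.closedBall (y + θ • (x0 - y)) (θ * R)) <
          ∫⁻ z in Metric.closedBall (y + θ • (x0 - y)) (θ * R), w z ∧
        ∫⁻ z in Metric.closedBall (y + θ • (x0 - y)) (θ * R), w z ≤
          2 ^ n * lam * volume (Metric.closedBall (y + θ • (x0 - y)) (θ * R)) := by
  set Q := Metric.closedBall x0 R with hQ
  have hQm : MeasurableSet Q := Metric.isClosed_closedBall.measurableSet
  have hd := (IsUnifLocDoublingMeasure.vitaliFamily (volume : Measure (Fin n → ℝ)) 1).ae_tendsto_lintegral_div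
    (f := Q.indicator w) (hw.meas.indicator hQm).aemeasurable
    (by rw [lintegral_indicator hQm]; exact hw.loc x0 R hR)
  filter_upwards [hd] with y hy hyQ hlam
  have hnest : ∀ s t : ℝ, 0 < s → s ≤ t → 
      Metric.closedBall (y + s • (x0 - y)) (s * R) ⊆
        Metric.closedBall (y + t • (x0 - y)) (t * R) := by
    intro s t hs hst
    apply Metric.closedBall_subset_closedBall'
    have : dist (y + s • (x0 - y)) (y + t • (x0 - y)) = (t - s) * dist x0 y := by
      rw [dist_eq_norm, dist_eq_norm]
      have : y + s • (x0 - y) - (y + t • (x0 - y)) = (s - t) • (x0 - y) := by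
        rw [sub_smul]; abel
      rw [this, norm_smul, Real.norm_eq_abs, abs_sub_comm, abs_of_nonneg (by linarith)]
    rw [this]
    rw [hQ, Metric.mem_closedBall, dist_comm] at hyQ
    nlinarith
  have hself : ∀ s : ℝ, 0 < s → y ∈ Metric.closedBall (y + s • (x0 - y)) (s * R) := by
    intro s hs
    rw [Metric.mem_closedBall, dist_eq_norm]
    have : y - (y + s • (x0 - y)) = -(s • (x0 - y)) := by abel
    rw [this, norm_neg, norm_smul, Real.norm_eq_abs, abs_of_pos hs, ← dist_eq_norm, dist_comm]
    gcongr
    exact hyQ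
  have hone : Metric.closedBall (y + (1 : ℝ) • (x0 - y)) (1 * R) = Q := by
    simp [hQ]
  have hsub : ∀ s : ℝ, 0 < s → s ≤ 1 → Metric.closedBall (y + s • (x0 - y)) (s * R) ⊆ Q := by
    intro s hs hs1
    have := hnest s 1 hs hs1
    rwa [hone] at this
  have hex : ∃ j : ℕ, lam * volume (Metric.closedBall (y + ((1/2:ℝ)^j) • (x0 - y)) ((1/2:ℝ)^j * R)) <
          ∫⁻ z in Metric.closedBall (y + ((1/2:ℝ)^j) • (x0 - y)) ((1/2:ℝ)^j * R), w z := by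
    have ht := hy.comp (IsUnifLocDoublingMeasure.tendsto_closedBall_filterAt (K := 1) (l := Filter.atTop) volume
      (fun j : ℕ => y + ((1/2:ℝ)^j) • (x0 - y)) (fun j => (1/2:ℝ)^j * R) ?_ ?_)
    · rw [indicator_of_mem hyQ] at ht
      obtain ⟨j, hj⟩ := (ht.eventually (lt_mem_nhds hlam)).exists
      refine ⟨j, ?_⟩
      simp only [Function.comp] at hj
      rw [ENNReal.lt_div_iff_mul_lt (Or.inl (vol_ne_zero _ _ (by positivity))) (Or.inl (vol_ne_top _ _))] at hj
      refine hj.trans_le ?_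
      refine lintegral_mono fun z => ?_
      exact indicator_le_self _ _ _
    · rw [tendsto_nhdsWithin_iff]
      constructor
      · have := (tendsto_pow_atTop_nhds_zero_of_lt_one (r := (1/2:ℝ)) (by norm_num) (by norm_num)).mul_const R
        simpa using this
      · exact Filter.Eventually.of_forall fun j => by simp only [mem_Ioi]; positivity
    · exact Filter.Eventually.of_forall fun j => by rw [one_mul]; exact hself _ (by positivity)
  classical
  obtain ⟨hj1, hj2⟩ := (⟨Nat.find_spec hex, fun m hm => Nat.find_min hex hm⟩ :
    _ ∧ ∀ m, m < Nat.find hex → _)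
  set j := Nat.find hex with hjdef
  refine ⟨(1/2:ℝ)^j, by positivity, pow_le_one₀ (by norm_num) (by norm_num), hself _ (by positivity),
    hsub _ (by positivity) (pow_le_one₀ (by norm_num) (by norm_num)), hj1, ?_⟩
  rcases hjj : j with _ | i
  · exfalso
    rw [hjj] at hj1
    rw [pow_zero, hone] at hj1
    exact absurd h (not_le.2 hj1)
  · have h2 := not_lt.1 (hj2 i (by omega))
    have h3 : (1/2:ℝ)^i = 2 * (1/2)^(i+1) := by rw [pow_succ]; ring
    refine (lintegral_mono_set (hnest ((1/2:ℝ)^(i+1)) ((1/2:ℝ)^i) (by positivity) (by rw [h3]; linarith [show (0:ℝ) < (1/2)^(i+1) by positivity]))).trans (h2.trans (le_of_eq ?_))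
    have h4 : (1/2:ℝ)^i * R = 2 * ((1/2)^(i+1) * R) := by rw [h3]; ring
    rw [h4, vol_mul _ (y + ((1/2:ℝ)^(i+1)) • (x0 - y)) 2 _ (by norm_num) (by positivity)]
    have h5 : ENNReal.ofReal 2 = 2 := by norm_num
    rw [h5]; ring

theorem geh1 {n : ℕ} {w : (Fin n → ℝ) → ℝ≥0∞} {C : ℝ≥0∞} (hw : GoodW w C)
    (x0 : Fin n → ℝ) (R : ℝ) (hR : 0 < R) (lam : ℝ≥0∞)
    (h : ∫⁻ z in Metric.closedBall x0 R, w z ≤ lam * volume (Metric.closedBall x0 R)) :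
    ∫⁻ z in Metric.closedBall x0 R ∩ {z | lam < w z}, w z ≤
      C * 5 ^ n * (2 ^ n * lam) * volume (Metric.closedBall x0 R ∩ {z | lam < C * w z}) := by
  have hc := geh_cubes hw x0 R hR lam h
  set Q := Metric.closedBall x0 R with hQ
  have hQm : MeasurableSet Q := Metric.isClosed_closedBall.measurableSet
  set T : Set (Fin n → ℝ) := {y | ∃ θ : ℝ, 0 < θ ∧ θ ≤ 1 ∧ y ∈ Metric.closedBall (y + θ • (x0 - y)) (θ * R) ∧
        Metric.closedBall (y + θ • (x0 - y)) (θ * R) ⊆ Metric.closedBall x0 R ∧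
        lam * volume (Metric.closedBall (y + θ • (x0 - y)) (θ * R)) <
          ∫⁻ z in Metric.closedBall (y + θ • (x0 - y)) (θ * R), w z ∧
        ∫⁻ z in Metric.closedBall (y + θ • (x0 - y)) (θ * R), w z ≤
          2 ^ n * lam * volume (Metric.closedBall (y + θ • (x0 - y)) (θ * R))} with hT
  have hch : ∀ y, ∃ θ : ℝ, y ∈ T → (0 < θ ∧ θ ≤ 1 ∧ y ∈ Metric.closedBall (y + θ • (x0 - y)) (θ * R) ∧
        Metric.closedBall (y + θ • (x0 - y)) (θ * R) ⊆ Metric.closedBall x0 R ∧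
        lam * volume (Metric.closedBall (y + θ • (x0 - y)) (θ * R)) <
          ∫⁻ z in Metric.closedBall (y + θ • (x0 - y)) (θ * R), w z ∧
        ∫⁻ z in Metric.closedBall (y + θ • (x0 - y)) (θ * R), w z ≤
          2 ^ n * lam * volume (Metric.closedBall (y + θ • (x0 - y)) (θ * R))) := by
    intro y
    by_cases hy : y ∈ T
    · obtain ⟨θ, hθ⟩ := hy
      exact ⟨θ, fun _ => hθ⟩
    · exact ⟨0, fun h => absurd h hy⟩
  choose θ hθ using hch
  set ρ : (Fin n → ℝ) → ℝ := fun y => θ y * R with hρ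
  set c : (Fin n → ℝ) → (Fin n → ℝ) := fun y => y + θ y • (x0 - y) with hcdef
  obtain ⟨U, hUT, hUd, hUc⟩ := Vitali.exists_disjoint_subfamily_covering_enlargement_closedBall
    T c ρ R (fun y hy => by
      have := hθ y hy
      simp only [hρ]; nlinarith [this.2.1]) 5 (by norm_num)
  have hρpos : ∀ y ∈ T, 0 < ρ y := fun y hy => mul_pos (hθ y hy).1 hR
  have hUcount : U.Countable := hUd.countable_of_nonempty_interior fun y hy => by
    rw [interior_closedBall _ (hρpos y (hUT hy)).ne']
    exact Metric.nonempty_ball.2 (hρpos y (hUT hy))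
  have hcov : (Q ∩ {z | lam < w z} : Set (Fin n → ℝ)) ≤ᵐ[volume]
      (⋃ b ∈ U, Metric.closedBall (c b) (5 * ρ b) : Set (Fin n → ℝ)) := by
    filter_upwards [hc] with y hy hy2
    have hyT : y ∈ T := hy hy2.1 hy2.2
    obtain ⟨b, hb, hb2⟩ := hUc y hyT
    exact mem_biUnion hb (hb2 (hθ y hyT).2.2.1)
  have hdisj : (⋃ b ∈ U, Metric.closedBall (c b) (ρ b) : Set (Fin n → ℝ)) ≤ᵐ[volume]
      (Q ∩ {z | lam < C * w z} : Set (Fin n → ℝ)) := by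
    have : ∀ᵐ y, ∀ b ∈ U, y ∈ Metric.closedBall (c b) (ρ b) →
        ∫⁻ z in Metric.closedBall (c b) (ρ b), w z ≤ C * volume (Metric.closedBall (c b) (ρ b)) * w y := by
      rw [ae_ball_iff hUcount]
      intro b hb
      exact hw.a1 _ _ (hρpos b (hUT hb))
    filter_upwards [this] with y hy hy2
    obtain ⟨b, hb, hyb⟩ := mem_iUnion₂.1 hy2
    have hbT := hθ b (hUT hb)
    refine ⟨hbT.2.2.2.1 hyb, ?_⟩
    have h1 := hbT.2.2.2.2.1.trans_le (hy b hb hyb)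
    have h2 : volume (Metric.closedBall (c b) (ρ b)) * lam < 
        volume (Metric.closedBall (c b) (ρ b)) * (C * w y) := by
      calc _ = lam * volume (Metric.closedBall (c b) (ρ b)) := mul_comm _ _
        _ < _ := h1
        _ = _ := by ring
    exact lt_of_mul_lt_mul_left' h2
  calc ∫⁻ z in Q ∩ {z | lam < w z}, w z 
      ≤ ∫⁻ z in ⋃ b ∈ U, Metric.closedBall (c b) (5 * ρ b), w z := lintegral_mono_set' hcov
    _ = ∫⁻ z in ⋃ b : U, Metric.closedBall (c b) (5 * ρ b), w z := by rw [biUnion_eq_iUnion]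
    _ ≤ ∑' b : U, ∫⁻ z in Metric.closedBall (c b) (5 * ρ b), w z := by
        have := hUcount.to_subtype
        exact lintegral_iUnion_le _ _
    _ ≤ ∑' b : U, C * 5 ^ n * (2 ^ n * lam) * volume (Metric.closedBall (c b) (ρ b)) := by
        refine ENNReal.tsum_le_tsum fun b => ?_
        refine (hw.doubling _ _ (hρpos b (hUT b.2))).trans ?_
        rw [mul_assoc (C * 5 ^ n)]
        gcongr
        exact (hθ b (hUT b.2)).2.2.2.2.2
    _ = C * 5 ^ n * (2 ^ n * lam) * volume (⋃ b ∈ U, Metric.closedBall (c b) (ρ b)) := by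
        rw [ENNReal.tsum_mul_left, measure_biUnion hUcount hUd]
        exact fun b _ => Metric.isClosed_closedBall.measurableSet
    _ ≤ _ := mul_le_mul' le_rfl (measure_mono_ae hdisj)


theorem dyadic_sum_le (a lam : ℝ≥0∞) (N : ℕ) :
    ∑ j ∈ Finset.range N, (if 2 ^ j * lam < a then 2 ^ j * lam else 0) ≤ 2 * a := by
  have h2 : ∀ N : ℕ, ∑ j ∈ Finset.range N, (2 : ℝ≥0∞) ^ j * lam ≤ 2 ^ N * lam := by
    intro N
    induction N with
    | zero => simp
    | succ N ih =>
      rw [Finset.sum_range_succ, pow_succ, mul_two, add_mul]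
      gcongr
  induction N with
  | zero => simp
  | succ N ih =>
    by_cases h : 2 ^ N * lam < a
    · calc _ ≤ ∑ j ∈ Finset.range (N+1), (2 : ℝ≥0∞) ^ j * lam := by
            refine Finset.sum_le_sum fun j _ => ?_
            split_ifs
            · exact le_rfl
            · exact zero_le
        _ ≤ 2 ^ (N+1) * lam := h2 _
        _ = 2 * (2 ^ N * lam) := by ring
        _ ≤ _ := by gcongr
    · rw [Finset.sum_range_succ, if_neg h, add_zero]
      exact ih

theorem geh_sum {n : ℕ} {w : (Fin n → ℝ) → ℝ≥0∞} (hw : Measurable w)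
    (Q : Set (Fin n → ℝ)) (hQm : MeasurableSet Q) (lam : ℝ≥0∞) (N : ℕ) :
    ∑ j ∈ Finset.range N, 2 ^ j * lam * volume (Q ∩ {z | 2 ^ j * lam < w z}) ≤
      2 * ∫⁻ z in Q ∩ {z | lam < w z}, w z := by
  have hm : ∀ s : ℝ≥0∞, MeasurableSet (Q ∩ {z | s < w z}) := fun s =>
    hQm.inter (measurableSet_lt measurable_const hw)
  have h1 : ∀ j : ℕ, 2 ^ j * lam * volume (Q ∩ {z | 2 ^ j * lam < w z}) =
      ∫⁻ z in Q ∩ {z | lam < w z}, (if 2 ^ j * lam < w z then 2 ^ j * lam else 0) := by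
    intro j
    have : (fun z => if 2 ^ j * lam < w z then 2 ^ j * lam else 0) =
      ({z | 2 ^ j * lam < w z}).indicator (fun _ => 2 ^ j * lam) := by
      ext z; simp [indicator]
    rw [this, lintegral_indicator (measurableSet_lt measurable_const hw), lintegral_const,
      Measure.restrict_apply_univ, Measure.restrict_apply (measurableSet_lt measurable_const hw)]
    congr 2
    ext z
    simp only [mem_inter_iff, mem_ofPred_eq]
    constructor
    · rintro ⟨a, b⟩
      refine ⟨b, a, lt_of_le_of_lt ?_ b⟩
      calc lam = 1 * lam := (one_mul _).symm
        _ ≤ _ := by gcongr; exact one_le_pow₀ (by norm_num)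
    · rintro ⟨b, a, _⟩
      exact ⟨a, b⟩
  simp_rw [h1]
  rw [← lintegral_finsetSum, ← lintegral_const_mul _ hw]
  · exact lintegral_mono fun z => dyadic_sum_le _ _ _
  · intro j _
    exact Measurable.ite (measurableSet_lt measurable_const hw) measurable_const measurable_const

theorem geh_half {n : ℕ} {w : (Fin n → ℝ) → ℝ≥0∞} {C : ℝ≥0∞} (hw : GoodW w C)
    (hC1 : 1 ≤ C) (hCt : C ≠ ⊤) :
    ∃ K : ℝ≥0∞, 1 ≤ K ∧ K ≠ ⊤ ∧ ∀ (x0 : Fin n → ℝ) (R : ℝ), 0 < R → ∀ lam : ℝ≥0∞,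
      ∫⁻ z in Metric.closedBall x0 R, w z ≤ lam * volume (Metric.closedBall x0 R) →
      2 * ∫⁻ z in Metric.closedBall x0 R ∩ {z | K * lam < w z}, w z ≤
        ∫⁻ z in Metric.closedBall x0 R ∩ {z | lam < w z}, w z := by
  set D0 : ℝ≥0∞ := C * 5 ^ n * 2 ^ n * C with hD0
  have hD0t : D0 ≠ ⊤ := by
    rw [hD0]; finiteness
  have hC0 : C ≠ 0 := (lt_of_lt_of_le one_pos hC1).ne'
  have hD00 : D0 ≠ 0 := by
    rw [hD0]; positivity
  obtain ⟨N, hN⟩ := ENNReal.exists_nat_gt (r := 4 * D0) (by finiteness)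
  refine ⟨C * 2 ^ N, ?_, by finiteness, ?_⟩
  · calc (1 : ℝ≥0∞) = 1 * 1 := by simp
      _ ≤ _ := by gcongr; exact one_le_pow₀ (by norm_num)
  intro x0 R hR lam hlam
  set Q := Metric.closedBall x0 R with hQ
  have hQm : MeasurableSet Q := Metric.isClosed_closedBall.measurableSet
  have h1 : ∀ j : ℕ, j ≤ N → ∫⁻ z in Q ∩ {z | C * 2 ^ N * lam < w z}, w z ≤
      D0 * (2 ^ j * lam * volume (Q ∩ {z | 2 ^ j * lam < w z})) := by
    intro j hj
    have hge := geh1 hw x0 R hR (C * 2 ^ j * lam) (hlam.trans (by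
      gcongr
      calc lam = 1 * 1 * lam := by simp
        _ ≤ _ := by gcongr; exact one_le_pow₀ (by norm_num)))
    calc _ ≤ ∫⁻ z in Q ∩ {z | C * 2 ^ j * lam < w z}, w z := by
          apply lintegral_mono_set
          apply inter_subset_inter_right
          intro z hz
          rw [mem_ofPred_eq] at hz ⊢
          refine lt_of_le_of_lt ?_ hz
          gcongr
          norm_num
      _ ≤ _ := hge
      _ ≤ C * 5 ^ n * (2 ^ n * (C * 2 ^ j * lam)) * volume (Q ∩ {z | 2 ^ j * lam < w z}) := by
          refine mul_le_mul' le_rfl (measure_mono (inter_subset_inter_right _ ?_))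
          intro z hz
          rw [mem_ofPred_eq] at hz ⊢
          rw [mul_assoc] at hz
          exact lt_of_mul_lt_mul_left' hz
      _ = _ := by rw [hD0]; ring
  have h2 : (N : ℝ≥0∞) * ∫⁻ z in Q ∩ {z | C * 2 ^ N * lam < w z}, w z ≤
      D0 * (2 * ∫⁻ z in Q ∩ {z | lam < w z}, w z) := by
    calc _ = ∑ j ∈ Finset.range N, ∫⁻ z in Q ∩ {z | C * 2 ^ N * lam < w z}, w z := by simp
      _ ≤ ∑ j ∈ Finset.range N, D0 * (2 ^ j * lam * volume (Q ∩ {z | 2 ^ j * lam < w z})) :=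
          Finset.sum_le_sum fun j hj => h1 j (Finset.mem_range.1 hj).le
      _ ≤ _ := by
          rw [← Finset.mul_sum]
          gcongr
          exact geh_sum hw.meas Q hQm lam N
  rw [← ENNReal.mul_le_mul_iff_right (a := 2 * D0) (by positivity) (by finiteness)]
  calc _ = (4 * D0) * ∫⁻ z in Q ∩ {z | C * 2 ^ N * lam < w z}, w z := by ring
    _ ≤ N * ∫⁻ z in Q ∩ {z | C * 2 ^ N * lam < w z}, w z := by gcongr
    _ ≤ _ := h2
    _ = _ := by ring

theorem ainf {n : ℕ} {w : (Fin n → ℝ) → ℝ≥0∞} {C : ℝ≥0∞} (hw : GoodW w C)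
    (hC1 : 1 ≤ C) (hCt : C ≠ ⊤) :
    ∃ K : ℝ≥0∞, 1 ≤ K ∧ K ≠ ⊤ ∧ ∀ (x0 : Fin n → ℝ) (R : ℝ), 0 < R →
      ∀ (E : Set (Fin n → ℝ)), MeasurableSet E → ∀ (i : ℕ) (D : ℝ≥0∞),
      volume E * (2 * K) ^ i ≤ D * volume (Metric.closedBall x0 R) →
      (∫⁻ z in E ∩ Metric.closedBall x0 R, w z) * 2 ^ i ≤
        (D + 1) * ∫⁻ z in Metric.closedBall x0 R, w z := by
  obtain ⟨K, hK1, hKt, hK⟩ := geh_half hw hC1 hCt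
  refine ⟨K, hK1, hKt, ?_⟩
  intro x0 R hR E hE i D hED
  set Q := Metric.closedBall x0 R with hQ
  have hQm : MeasurableSet Q := Metric.isClosed_closedBall.measurableSet
  have hQ0 : volume Q ≠ 0 := vol_ne_zero _ _ hR
  have hQt : volume Q ≠ ⊤ := vol_ne_top _ _
  set lam : ℝ≥0∞ := (∫⁻ z in Q, w z) / volume Q with hlam
  have hl : lam * volume Q = ∫⁻ z in Q, w z := ENNReal.div_mul_cancel hQ0 hQt
  have hF : ∀ i : ℕ, (∫⁻ z in Q ∩ {z | K ^ i * lam < w z}, w z) * 2 ^ i ≤ ∫⁻ z in Q, w z := by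
    intro i
    induction i with
    | zero => 
      rw [pow_zero, pow_zero, mul_one]
      exact lintegral_mono_set inter_subset_left
    | succ i ih =>
      refine le_trans ?_ ih
      have := hK x0 R hR (K ^ i * lam) (by
        rw [← hl]; gcongr
        calc lam = 1 * lam := by simp
          _ ≤ _ := by gcongr; exact one_le_pow₀ hK1)
      rw [← mul_assoc, ← pow_succ'] at this
      calc _ = (2 * ∫⁻ z in Q ∩ {z | K ^ (i+1) * lam < w z}, w z) * 2 ^ i := by ring
        _ ≤ _ := by gcongr
  have h1 : ∫⁻ z in E ∩ Q, w z ≤ K ^ i * lam * volume E +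
      ∫⁻ z in Q ∩ {z | K ^ i * lam < w z}, w z := by
    calc _ ≤ ∫⁻ z in (E ∩ {z | w z ≤ K ^ i * lam}) ∪ (Q ∩ {z | K ^ i * lam < w z}), w z := by
          apply lintegral_mono_set
          intro z hz
          rcases le_or_gt (w z) (K ^ i * lam) with h | h
          · exact Or.inl ⟨hz.1, h⟩
          · exact Or.inr ⟨hz.2, h⟩
      _ ≤ (∫⁻ z in (E ∩ {z | w z ≤ K ^ i * lam}), w z) + _ := lintegral_union_le _ _ _
      _ ≤ _ := by
          gcongr
          calc _ ≤ ∫⁻ z in (E ∩ {z | w z ≤ K ^ i * lam}), K ^ i * lam := by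
                apply setLIntegral_mono measurable_const
                exact fun z hz => hz.2
            _ = K ^ i * lam * volume (E ∩ {z | w z ≤ K ^ i * lam}) := by
                rw [lintegral_const, Measure.restrict_apply_univ]
            _ ≤ _ := by gcongr; exact inter_subset_left
  calc _ ≤ (K ^ i * lam * volume E + ∫⁻ z in Q ∩ {z | K ^ i * lam < w z}, w z) * 2 ^ i := by gcongr
    _ = lam * (volume E * (2 * K) ^ i) +
        (∫⁻ z in Q ∩ {z | K ^ i * lam < w z}, w z) * 2 ^ i := by rw [mul_pow]; ring
    _ ≤ lam * (D * volume Q) + ∫⁻ z in Q, w z := by gcongr; exact hF i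
    _ = (D + 1) * (lam * volume Q) := by rw [hl, ← hl]; ring
    _ = _ := by rw [hl]


theorem stop_bound {n : ℕ} (hn : 0 < n) (g : (Fin n → ℝ) → ℝ≥0∞) (hg : ∫⁻ z, g z ≠ ⊤)
    (s : ℝ≥0∞) (hs0 : s ≠ 0) (hst : s ≠ ⊤) :
    ∃ R : ℝ, ∀ x r, 0 < r → s * volume (Metric.closedBall x r) <
      ∫⁻ z in Metric.closedBall x r, g z → r ≤ R := by
  refine ⟨max 1 ((∫⁻ z, g z) / s).toReal, ?_⟩
  intro x r hr h
  by_contra hcon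
  rw [not_le, max_lt_iff] at hcon
  have h1 : s * volume (Metric.closedBall x r) < ∫⁻ z, g z :=
    h.trans_le (setLIntegral_le_lintegral _ _)
  rw [mul_comm, ← ENNReal.lt_div_iff_mul_lt (Or.inl hs0) (Or.inl hst),
    Real.volume_pi_closedBall _ hr.le] at h1
  have h2 := ENNReal.toReal_mono (ENNReal.div_ne_top hg hs0) h1.le
  rw [ENNReal.toReal_ofReal (by positivity), Fintype.card_fin] at h2
  have h3 : (2 * r) ^ 1 ≤ (2 * r) ^ n := pow_le_pow_right₀ (by linarith) hn
  linarith

theorem stop_radius {n : ℕ} (hn : 0 < n) (g : (Fin n → ℝ) → ℝ≥0∞) (hg : ∫⁻ z, g z ≠ ⊤)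
    (s : ℝ≥0∞) (hs0 : s ≠ 0) (hst : s ≠ ⊤) (x : Fin n → ℝ)
    (h : ∃ r, 0 < r ∧ s * volume (Metric.closedBall x r) < ∫⁻ z in Metric.closedBall x r, g z) :
    ∃ r, 0 < r ∧ s * volume (Metric.closedBall x r) < ∫⁻ z in Metric.closedBall x r, g z ∧
      ∀ r', 2 * r ≤ r' → ∫⁻ z in Metric.closedBall x r', g z ≤
        s * volume (Metric.closedBall x r') := by
  obtain ⟨R, hR⟩ := stop_bound hn g hg s hs0 hst
  set A : Set ℝ := {r | 0 < r ∧ s * volume (Metric.closedBall x r) <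
    ∫⁻ z in Metric.closedBall x r, g z} with hA
  have hbdd : BddAbove A := ⟨R, fun r hr => hR x r hr.1 hr.2⟩
  obtain ⟨r0, hr0⟩ := h
  have hr0A : r0 ∈ A := hr0
  have hpos : 0 < sSup A := hr0.1.trans_le (le_csSup hbdd hr0A)
  obtain ⟨r, hrA, hr⟩ := exists_lt_of_lt_csSup ⟨r0, hr0A⟩ (half_lt_self hpos)
  refine ⟨r, hrA.1, hrA.2, fun r' hr' => ?_⟩
  by_contra hcon
  rw [not_le] at hcon
  have : r' ∈ A := ⟨by linarith [hrA.1], hcon⟩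
  have := le_csSup hbdd this
  linarith

theorem level_cover {n : ℕ} (hn : 0 < n) (g : (Fin n → ℝ) → ℝ≥0∞) (hg : ∫⁻ z, g z ≠ ⊤)
    {v : (Fin n → ℝ) → ℝ≥0∞} {C : ℝ≥0∞} (hv : GoodW v C)
    (s : ℝ≥0∞) (hs0 : s ≠ 0) (hst : s ≠ ⊤) (s' : ℝ≥0∞) (S : Set (Fin n → ℝ))
    (hS : ∀ x ∈ S, v x ≤ s' ∧ ∃ r, 0 < r ∧ s * volume (Metric.closedBall x r) <
      ∫⁻ z in Metric.closedBall x r, g z) :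
    ∃ (J : Set (Fin n → ℝ)) (r : (Fin n → ℝ) → ℝ), J.Countable ∧
      J.PairwiseDisjoint (fun x => Metric.closedBall x (r x)) ∧
      (∀ x ∈ J, 0 < r x ∧
        s * volume (Metric.closedBall x (r x)) < ∫⁻ z in Metric.closedBall x (r x), g z ∧
        (∀ r', 2 * r x ≤ r' → ∫⁻ z in Metric.closedBall x r', g z ≤
          s * volume (Metric.closedBall x r')) ∧
        ∫⁻ z in Metric.closedBall x (5 * r x), v z ≤
          C * s' * volume (Metric.closedBall x (5 * r x))) ∧
      ∀ᵐ y, y ∈ S → ∃ x ∈ J, y ∈ Metric.closedBall x (5 * r x) := by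
  have hch : ∀ x, ∃ r, x ∈ S → (0 < r ∧
      s * volume (Metric.closedBall x r) < ∫⁻ z in Metric.closedBall x r, g z ∧
      ∀ r', 2 * r ≤ r' → ∫⁻ z in Metric.closedBall x r', g z ≤
        s * volume (Metric.closedBall x r')) := by
    intro x
    by_cases hx : x ∈ S
    · obtain ⟨r, hr⟩ := stop_radius hn g hg s hs0 hst x (hS x hx).2
      exact ⟨r, fun _ => hr⟩
    · exact ⟨0, fun h => absurd h hx⟩
  choose r hr using hch
  obtain ⟨R, hR⟩ := stop_bound hn g hg s hs0 hst
  obtain ⟨U, hUS, hUd, hUc⟩ := Vitali.exists_disjoint_subfamily_covering_enlargement_closedBall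
    S id r R (fun x hx => hR x _ (hr x hx).1 (hr x hx).2.1) 5 (by norm_num)
  simp only [id] at hUd hUc
  have hUcount : U.Countable := hUd.countable_of_nonempty_interior fun y hy => by
    rw [interior_closedBall _ (hr y (hUS hy)).1.ne']
    exact Metric.nonempty_ball.2 (hr y (hUS hy)).1
  refine ⟨U ∩ {x | ∫⁻ z in Metric.closedBall x (5 * r x), v z ≤
          C * s' * volume (Metric.closedBall x (5 * r x))}, r, hUcount.mono inter_subset_left,
    hUd.subset inter_subset_left, ?_, ?_⟩
  · intro x hx
    obtain ⟨h1, h2, h3⟩ := hr x (hUS hx.1)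
    exact ⟨h1, h2, h3, hx.2⟩
  · have : ∀ᵐ y, ∀ b ∈ U, y ∈ Metric.closedBall b (5 * r b) →
        ∫⁻ z in Metric.closedBall b (5 * r b), v z ≤
          C * volume (Metric.closedBall b (5 * r b)) * v y := by
      rw [ae_ball_iff hUcount]
      intro b hb
      exact hv.a1 _ _ (by linarith [(hr b (hUS hb)).1])
    filter_upwards [this] with y hy hyS
    obtain ⟨b, hb, hsub⟩ := hUc y hyS
    have hyb : y ∈ Metric.closedBall b (5 * r b) :=
      hsub (Metric.mem_closedBall_self (hr y hyS).1.le)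
    refine ⟨b, ⟨hb, ?_⟩, hyb⟩
    rw [mem_ofPred_eq]
    refine (hy b hb hyb).trans ?_
    calc _ ≤ C * volume (Metric.closedBall b (5 * r b)) * s' := by gcongr; exact (hS y hyS).1
      _ = _ := by ring

/-- The conclusion of `ainf` as a property. -/
def AInf {n : ℕ} (w : (Fin n → ℝ) → ℝ≥0∞) (a : ℝ≥0∞) : Prop :=
  ∀ (x0 : Fin n → ℝ) (R : ℝ), 0 < R →
      ∀ (E : Set (Fin n → ℝ)), MeasurableSet E → ∀ (i : ℕ) (D : ℝ≥0∞),
      volume E * a ^ i ≤ D * volume (Metric.closedBall x0 R) →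
      (∫⁻ z in E ∩ Metric.closedBall x0 R, w z) * 2 ^ i ≤
        (D + 1) * ∫⁻ z in Metric.closedBall x0 R, w z

/-- The family of stopping cubes. -/
structure Fam {n : ℕ} (ι : Type) (g v : (Fin n → ℝ) → ℝ≥0∞) (C a : ℝ≥0∞)
    (x : ι → Fin n → ℝ) (r : ι → ℝ) (lev z : ι → ℤ) : Prop where
  rpos : ∀ i, 0 < r i
  lo : ∀ i, a ^ lev i * volume (Metric.closedBall (x i) (r i)) <
    ∫⁻ y in Metric.closedBall (x i) (r i), g y
  hi : ∀ i, ∀ r', 2 * r i ≤ r' → ∫⁻ y in Metric.closedBall (x i) r', g y ≤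
    a ^ lev i * volume (Metric.closedBall (x i) r')
  disj : ∀ i j, i ≠ j → lev i = lev j →
    Disjoint (Metric.closedBall (x i) (r i)) (Metric.closedBall (x j) (r j))
  zlo : ∀ i, C * a ^ z i * volume (Metric.closedBall (x i) (5 * r i)) <
    ∫⁻ y in Metric.closedBall (x i) (5 * r i), v y
  zhi : ∀ i, ∫⁻ y in Metric.closedBall (x i) (5 * r i), v y ≤
    C * (a ^ z i * a) * volume (Metric.closedBall (x i) (5 * r i))

theorem vol5 {n : ℕ} (x : Fin n → ℝ) (r : ℝ) (hr : 0 < r) :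
    volume (Metric.closedBall x (5 * r)) = 5 ^ n * volume (Metric.closedBall x r) := by
  rw [vol_mul x x 5 r (by norm_num) hr.le]
  norm_num

/-- Cubes of a much higher level which meet a given cube are contained in its dilation. -/
theorem Fam.sub {n : ℕ} {ι : Type} {g v : (Fin n → ℝ) → ℝ≥0∞} {C a : ℝ≥0∞}
    {x : ι → Fin n → ℝ} {r : ι → ℝ} {lev z : ι → ℤ} (F : Fam ι g v C a x r lev z)
    (ha2 : 2 ≤ a) (hat : a ≠ ⊤) (i j : ι) (m : ℕ) (hm : 3 ^ n ≤ 2 ^ m)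
    (hlev : lev j = lev i + m)
    (hne : (Metric.closedBall (x j) (r j) ∩ Metric.closedBall (x i) (r i)).Nonempty) :
    Metric.closedBall (x j) (r j) ⊆ Metric.closedBall (x i) (5 * r i) := by
  have ha0 : a ≠ 0 := (lt_of_lt_of_le (by norm_num) ha2).ne'
  obtain ⟨p, hp1, hp2⟩ := hne
  rw [Metric.mem_closedBall] at hp1 hp2
  have hd : dist (x j) (x i) ≤ r j + r i := by
    have := dist_triangle (x j) p (x i)
    rw [dist_comm (x j) p] at this
    linarith
  have hri := F.rpos i
  have hrj := F.rpos j
  by_cases h : r j ≤ r i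
  · apply Metric.closedBall_subset_closedBall'
    linarith
  · exfalso
    rw [not_le] at h
    have h1 : Metric.closedBall (x j) (r j) ⊆ Metric.closedBall (x i) (3 * r j) := by
      apply Metric.closedBall_subset_closedBall'
      linarith
    have h2 := (F.lo j).trans_le ((lintegral_mono_set h1).trans (F.hi i (3 * r j) (by linarith)))
    rw [vol_mul (x i) (x j) 3 (r j) (by norm_num) hrj.le, hlev, ENNReal.zpow_add ha0 hat,
      zpow_natCast, mul_assoc] at h2
    have h3 := lt_of_mul_lt_mul_left' h2
    have h4 : ENNReal.ofReal 3 = 3 := by norm_num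
    rw [h4] at h3
    have h5 := lt_of_mul_lt_mul_right' h3
    have h6 : (3 : ℝ≥0∞) ^ n ≤ 2 ^ m := by exact_mod_cast hm
    have h7 : (2 : ℝ≥0∞) ^ m ≤ a ^ m := by gcongr
    exact absurd (h6.trans h7) (not_le.2 h5)

theorem Fam.level {n : ℕ} {ι : Type} [Countable ι] {g v : (Fin n → ℝ) → ℝ≥0∞} {C a : ℝ≥0∞}
    {x : ι → Fin n → ℝ} {r : ι → ℝ} {lev z : ι → ℤ} (F : Fam ι g v C a x r lev z)
    (hv : GoodW v C) (hva : AInf v a)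
    (ha2 : 2 ≤ a) (hat : a ≠ ⊤) (A : Set ι) (i : ι) (m : ℕ) (hm : 3 ^ n ≤ 2 ^ m)
    (hA : ∀ j ∈ A, lev j - z j = lev i - z i) :
    2 ^ m * ∫⁻ y in ⋃ j ∈ {j ∈ A | lev j = lev i + m ∧
        (Metric.closedBall (x j) (r j) ∩ Metric.closedBall (x i) (r i)).Nonempty},
        Metric.closedBall (x j) (r j), g y ≤
      2 ^ n * ((C * a + 1) * (C * a * 5 ^ n)) * ∫⁻ y in Metric.closedBall (x i) (r i), g y := by
  have ha0 : a ≠ 0 := (lt_of_lt_of_le (by norm_num) ha2).ne'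
  set B : Set ι := {j ∈ A | lev j = lev i + m ∧
        (Metric.closedBall (x j) (r j) ∩ Metric.closedBall (x i) (r i)).Nonempty} with hB
  set U : Set (Fin n → ℝ) := ⋃ j ∈ B, Metric.closedBall (x j) (r j) with hU
  have hBc : B.Countable := B.to_countable
  have hUm : MeasurableSet U :=
    MeasurableSet.biUnion hBc fun j _ => Metric.isClosed_closedBall.measurableSet
  have hBd : B.PairwiseDisjoint (fun j => Metric.closedBall (x j) (r j)) := by
    intro j hj k hk hjk
    exact F.disj j k hjk (hj.2.1.trans hk.2.1.symm)
  have hUQ : U ⊆ Metric.closedBall (x i) (5 * r i) :=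
    iUnion₂_subset fun j hj => F.sub ha2 hat i j m hm hj.2.1 hj.2.2
  have hz0 : a ^ z i ≠ 0 := (ENNReal.zpow_pos ha0 hat _).ne'
  have hzt : a ^ z i ≠ ⊤ := (ENNReal.zpow_lt_top ha0 hat _).ne
  -- lower bound for `v` on `U`
  have h1 : a ^ z i * a ^ m * volume U ≤ ∫⁻ y in U, v y := by
    have hae : ∀ᵐ y, y ∈ U → a ^ z i * a ^ m ≤ v y := by
      have : ∀ᵐ y, ∀ j, y ∈ Metric.closedBall (x j) (5 * r j) →
        ∫⁻ z in Metric.closedBall (x j) (5 * r j), v z ≤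
          C * volume (Metric.closedBall (x j) (5 * r j)) * v y := by
        rw [ae_all_iff]
        intro j
        exact hv.a1 _ _ (by linarith [F.rpos j])
      filter_upwards [this] with y hy hyU
      obtain ⟨j, hj, hyj⟩ := mem_iUnion₂.1 hyU
      have hrj := F.rpos j
      have h2 := (F.zlo j).trans_le (hy j (Metric.closedBall_subset_closedBall (by linarith) hyj))
      have h3 : C * volume (Metric.closedBall (x j) (5 * r j)) * a ^ z j <
        C * volume (Metric.closedBall (x j) (5 * r j)) * v y := by
        calc _ = C * a ^ z j * volume (Metric.closedBall (x j) (5 * r j)) := by ring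
          _ < _ := h2
      have h4 := (lt_of_mul_lt_mul_left' h3).le
      have h5 : z j = z i + m := by
        have := hA j hj.1
        have := hj.2.1
        omega
      rwa [h5, ENNReal.zpow_add ha0 hat, zpow_natCast] at h4
    calc _ = ∫⁻ y in U, a ^ z i * a ^ m := by rw [lintegral_const, Measure.restrict_apply_univ]
      _ ≤ _ := lintegral_mono_ae ((ae_restrict_iff' hUm).2 hae)
  have h2 : volume U * a ^ m ≤ C * a * volume (Metric.closedBall (x i) (5 * r i)) := by
    rw [← ENNReal.mul_le_mul_iff_right hz0 hzt]
    calc _ = a ^ z i * a ^ m * volume U := by ring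
      _ ≤ _ := h1
      _ ≤ _ := lintegral_mono_set hUQ
      _ ≤ _ := F.zhi i
      _ = _ := by ring
  have h3 := hva (x i) (5 * r i) (by linarith [F.rpos i]) U hUm m _ h2
  rw [inter_eq_left.2 hUQ] at h3
  have h4 : a ^ m * 2 ^ m * volume U ≤ (C * a + 1) * (C * a * 5 ^ n) *
      volume (Metric.closedBall (x i) (r i)) := by
    rw [← ENNReal.mul_le_mul_iff_right hz0 hzt]
    calc _ = a ^ z i * a ^ m * volume U * 2 ^ m := by ring
      _ ≤ _ := by gcongr
      _ ≤ _ := h3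
      _ ≤ (C * a + 1) * (C * (a ^ z i * a) * volume (Metric.closedBall (x i) (5 * r i))) := by
        gcongr; exact F.zhi i
      _ = _ := by rw [vol5 _ _ (F.rpos i)]; ring
  have h5 : ∫⁻ y in U, g y ≤ a ^ lev i * a ^ m * 2 ^ n * volume U := by
    have : Countable B := hBc.to_subtype
    calc _ = ∫⁻ y in ⋃ j : B, Metric.closedBall (x j) (r j), g y := by
          rw [hU, biUnion_eq_iUnion]
      _ ≤ ∑' j : B, ∫⁻ y in Metric.closedBall (x j) (r j), g y := lintegral_iUnion_le _ _
      _ ≤ ∑' j : B, a ^ lev i * a ^ m * 2 ^ n * volume (Metric.closedBall (x j) (r j)) := by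
          refine ENNReal.tsum_le_tsum fun j => ?_
          have hrj := F.rpos j
          refine (lintegral_mono_set (Metric.closedBall_subset_closedBall
            (by linarith : r j ≤ 2 * r j))).trans ((F.hi j (2 * r j) le_rfl).trans ?_)
          rw [vol_mul (x j) (x j) 2 _ (by norm_num) hrj.le, j.2.2.1, ENNReal.zpow_add ha0 hat,
            zpow_natCast]
          have : ENNReal.ofReal 2 = 2 := by norm_num
          rw [this, ← mul_assoc]
      _ = _ := by
          rw [ENNReal.tsum_mul_left, hU, measure_biUnion hBc hBd]
          exact fun b _ => Metric.isClosed_closedBall.measurableSet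
  calc _ ≤ 2 ^ m * (a ^ lev i * a ^ m * 2 ^ n * volume U) := by gcongr
    _ = 2 ^ n * a ^ lev i * (a ^ m * 2 ^ m * volume U) := by ring
    _ ≤ 2 ^ n * a ^ lev i * ((C * a + 1) * (C * a * 5 ^ n) *
      volume (Metric.closedBall (x i) (r i))) := by gcongr
    _ = 2 ^ n * ((C * a + 1) * (C * a * 5 ^ n)) *
      (a ^ lev i * volume (Metric.closedBall (x i) (r i))) := by ring
    _ ≤ _ := by gcongr; exact (F.lo i).le


theorem Fam.sparse {n : ℕ} {ι : Type} [Countable ι] {g v : (Fin n → ℝ) → ℝ≥0∞} {C a : ℝ≥0∞}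
    {x : ι → Fin n → ℝ} {r : ι → ℝ} {lev z : ι → ℤ} (F : Fam ι g v C a x r lev z)
    (hg : ∫⁻ y, g y ≠ ⊤) (hv : GoodW v C) (hva : AInf v a)
    (ha2 : 2 ≤ a) (hat : a ≠ ⊤) (A : Set ι) (i : ι) (m0 : ℕ) (hm : 3 ^ n ≤ 2 ^ m0)
    (hm0 : 4 * (2 ^ n * ((C * a + 1) * (C * a * 5 ^ n))) ≤ (2 : ℝ≥0∞) ^ m0)
    (hA : ∀ j ∈ A, lev j - z j = lev i - z i)
    (hgap : ∀ j ∈ A, lev i < lev j → lev i + m0 ≤ lev j) :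
    ∫⁻ y in Metric.closedBall (x i) (r i), g y ≤
      2 * ∫⁻ y in Metric.closedBall (x i) (r i) \
        ⋃ j ∈ {j ∈ A | lev i < lev j}, Metric.closedBall (x j) (r j), g y := by
  set D : ℝ≥0∞ := 2 ^ n * ((C * a + 1) * (C * a * 5 ^ n)) with hD
  set I := Metric.closedBall (x i) (r i) with hI
  set G := ∫⁻ y in I, g y with hG
  have hGt : G ≠ ⊤ := ne_top_of_le_ne_top hg (setLIntegral_le_lintegral _ _)
  set U : ℕ → Set (Fin n → ℝ) := fun m => ⋃ j ∈ {j ∈ A | lev j = lev i + m ∧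
        (Metric.closedBall (x j) (r j) ∩ Metric.closedBall (x i) (r i)).Nonempty},
        Metric.closedBall (x j) (r j) with hU
  set E := I \ ⋃ j ∈ {j ∈ A | lev i < lev j}, Metric.closedBall (x j) (r j) with hE
  have hsub : I ⊆ E ∪ ⋃ p : ℕ, U (m0 + p) := by
    intro y hy
    by_cases h : y ∈ ⋃ j ∈ {j ∈ A | lev i < lev j}, Metric.closedBall (x j) (r j)
    · right
      obtain ⟨j, hj, hyj⟩ := mem_iUnion₂.1 h
      have h1 := hgap j hj.1 hj.2
      refine mem_iUnion.2 ⟨(lev j - lev i - m0).toNat, mem_iUnion₂.2 ⟨j, ⟨hj.1, ?_, y, hyj, hy⟩, hyj⟩⟩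
      push_cast
      rw [Int.toNat_of_nonneg (by omega)]
      ring
    · exact Or.inl ⟨hy, h⟩
  have hp : ∀ p : ℕ, ∫⁻ y in U (m0 + p), g y ≤ (D * G * 2⁻¹ ^ m0) * 2⁻¹ ^ p := by
    intro p
    have h1 := F.level hv hva ha2 hat A i (m0 + p)
      (hm.trans (Nat.pow_le_pow_right (by norm_num) (by omega))) hA
    have h2 : (2 : ℝ≥0∞)⁻¹ ^ (m0 + p) * 2 ^ (m0 + p) = 1 := by
      rw [← mul_pow, ENNReal.inv_mul_cancel (by norm_num) (by norm_num), one_pow]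
    calc _ = 2⁻¹ ^ (m0 + p) * (2 ^ (m0 + p) * ∫⁻ y in U (m0 + p), g y) := by
          rw [← mul_assoc, h2, one_mul]
      _ ≤ 2⁻¹ ^ (m0 + p) * (D * G) := by gcongr
      _ = _ := by rw [pow_add]; ring
  have hV : 2 * ∫⁻ y in ⋃ p : ℕ, U (m0 + p), g y ≤ G := by
    calc _ ≤ 2 * ∑' p : ℕ, ∫⁻ y in U (m0 + p), g y := by gcongr; exact lintegral_iUnion_le _ _
      _ ≤ 2 * ∑' p : ℕ, (D * G * 2⁻¹ ^ m0) * 2⁻¹ ^ p := by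
          gcongr with p; exact hp p
      _ = 2⁻¹ ^ m0 * (4 * D) * G := by
          rw [ENNReal.tsum_mul_left, ENNReal.tsum_geometric, ENNReal.one_sub_inv_two, inv_inv]
          ring
      _ ≤ 2⁻¹ ^ m0 * 2 ^ m0 * G := by gcongr
      _ = G := by
          rw [← mul_pow, ENNReal.inv_mul_cancel (by norm_num) (by norm_num), one_pow, one_mul]
  have h3 : G ≤ (∫⁻ y in E, g y) + ∫⁻ y in ⋃ p : ℕ, U (m0 + p), g y :=
    (lintegral_mono_set hsub).trans (lintegral_union_le _ _ _)
  rw [← ENNReal.add_le_add_iff_right hGt]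
  calc G + G = 2 * G := (two_mul _).symm
    _ ≤ 2 * ((∫⁻ y in E, g y) + ∫⁻ y in ⋃ p : ℕ, U (m0 + p), g y) := by gcongr
    _ = 2 * (∫⁻ y in E, g y) + 2 * ∫⁻ y in ⋃ p : ℕ, U (m0 + p), g y := by ring
    _ ≤ _ := by gcongr

theorem Fam.cube {n : ℕ} {ι : Type} [Countable ι] {g u v : (Fin n → ℝ) → ℝ≥0∞} {C a : ℝ≥0∞}
    {x : ι → Fin n → ℝ} {r : ι → ℝ} {lev z : ι → ℤ} (F : Fam ι g v C a x r lev z)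
    (hg : ∫⁻ y, g y ≠ ⊤) (hu : GoodW u C) (hv : GoodW v C) (hua : AInf u a) (hva : AInf v a)
    (ha2 : 2 ≤ a) (hat : a ≠ ⊤) (hCt : C ≠ ⊤) (A : Set ι) (i : ι) (m0 : ℕ) (hm : 3 ^ n ≤ 2 ^ m0)
    (hm0 : 4 * (2 ^ n * ((C * a + 1) * (C * a * 5 ^ n))) ≤ (2 : ℝ≥0∞) ^ m0)
    (hA : ∀ j ∈ A, lev j - z j = lev i - z i)
    (hgap : ∀ j ∈ A, lev i < lev j → lev i + m0 ≤ lev j)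
    (l : ℕ) (hl : lev i = z i + l) :
    (a ^ lev i * a * ∫⁻ y in {y | a ^ lev i < v y} ∩ Metric.closedBall (x i) (5 * r i), u y) * 2 ^ l
     ≤ 2 * a * (C * a + 1) * C * 5 ^ n * ∫⁻ y in Metric.closedBall (x i) (r i) \
        ⋃ j ∈ {j ∈ A | lev i < lev j}, Metric.closedBall (x j) (r j), g y * u y := by
  have ha0 : a ≠ 0 := (lt_of_lt_of_le (by norm_num) ha2).ne'
  have hsp := F.sparse hg hv hva ha2 hat A i m0 hm hm0 hA hgap
  have hri := F.rpos i
  set Q := Metric.closedBall (x i) (5 * r i) with hQ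
  set I := Metric.closedBall (x i) (r i) with hI
  set E := I \ ⋃ j ∈ {j ∈ A | lev i < lev j}, Metric.closedBall (x j) (r j) with hE
  have hz0 : a ^ z i ≠ 0 := (ENNReal.zpow_pos ha0 hat _).ne'
  have hzt : a ^ z i ≠ ⊤ := (ENNReal.zpow_lt_top ha0 hat _).ne
  have hQm : MeasurableSet Q := Metric.isClosed_closedBall.measurableSet
  have hEm : MeasurableSet E := by
    refine Metric.isClosed_closedBall.measurableSet.diff ?_
    exact MeasurableSet.biUnion (to_countable _) fun j _ => Metric.isClosed_closedBall.measurableSet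
  have hIQ : I ⊆ Q := Metric.closedBall_subset_closedBall (by linarith)
  set S : Set (Fin n → ℝ) := {y | a ^ lev i < v y} ∩ Q with hS
  have hSm : MeasurableSet S := (measurableSet_lt measurable_const hv.meas).inter hQm
  have hvol : volume S * a ^ l ≤ C * a * volume Q := by
    rw [← ENNReal.mul_le_mul_iff_right hz0 hzt]
    calc _ = a ^ lev i * volume S := by rw [hl, ENNReal.zpow_add ha0 hat, zpow_natCast]; ring
      _ = ∫⁻ y in S, a ^ lev i := by rw [lintegral_const, Measure.restrict_apply_univ]
      _ ≤ ∫⁻ y in S, v y := by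
          apply setLIntegral_mono hv.meas
          intro y hy
          have := hy.1
          rw [mem_ofPred_eq] at this
          exact this.le
      _ ≤ ∫⁻ y in Q, v y := lintegral_mono_set inter_subset_right
      _ ≤ _ := F.zhi i
      _ = _ := by ring
  have h1 := hua (x i) (5 * r i) (by linarith) S hSm l _ hvol
  rw [inter_eq_left.2 (inter_subset_right : S ⊆ Q)] at h1
  have h2 : (∫⁻ y in Q, u y) * ∫⁻ y in E, g y ≤
      C * (5 ^ n * volume I) * ∫⁻ y in E, g y * u y := by
    rw [← lintegral_const_mul' _ _ (hu.loc _ _ (by linarith)),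
      ← lintegral_const_mul' _ _ (by have := vol_ne_top (x i) (r i); finiteness)]
    apply lintegral_mono_ae
    rw [ae_restrict_iff' hEm]
    filter_upwards [hu.a1 (x i) (5 * r i) (by linarith)] with y hy hyE
    have := hy (hIQ hyE.1)
    rw [vol5 _ _ hri] at this
    calc _ ≤ (C * (5 ^ n * volume I) * u y) * g y := by gcongr
      _ = _ := by ring
  rw [← ENNReal.mul_le_mul_iff_right (vol_ne_zero (x i) (r i) hri) (vol_ne_top (x i) (r i))]
  calc _ = a * (a ^ lev i * volume I) * ((∫⁻ y in S, u y) * 2 ^ l) := by ring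
    _ ≤ a * (2 * ∫⁻ y in E, g y) * ((C * a + 1) * ∫⁻ y in Q, u y) := by
        exact mul_le_mul' (mul_le_mul' le_rfl ((F.lo i).le.trans hsp)) h1
    _ = 2 * a * (C * a + 1) * ((∫⁻ y in Q, u y) * ∫⁻ y in E, g y) := by ring
    _ ≤ 2 * a * (C * a + 1) * (C * (5 ^ n * volume I) * ∫⁻ y in E, g y * u y) := by gcongr
    _ = _ := by ring

theorem Fam.total {n : ℕ} {ι : Type} [Countable ι] {g u v : (Fin n → ℝ) → ℝ≥0∞} {C a : ℝ≥0∞}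
    {x : ι → Fin n → ℝ} {r : ι → ℝ} {lev z : ι → ℤ} (F : Fam ι g v C a x r lev z)
    (hg : ∫⁻ y, g y ≠ ⊤) (hu : GoodW u C) (hv : GoodW v C) (hua : AInf u a) (hva : AInf v a)
    (ha2 : 2 ≤ a) (hat : a ≠ ⊤) (hCt : C ≠ ⊤) (m0 : ℕ) (hm : 3 ^ n ≤ 2 ^ m0)
    (hm1 : m0 ≠ 0)
    (hm0 : 4 * (2 ^ n * ((C * a + 1) * (C * a * 5 ^ n))) ≤ (2 : ℝ≥0∞) ^ m0)
    (hl : ∀ i, z i ≤ lev i) :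
    ∑' i, (a ^ lev i * a *
        ∫⁻ y in {y | a ^ lev i < v y} ∩ Metric.closedBall (x i) (5 * r i), u y) ≤
      2 * m0 * (2 * a * (C * a + 1) * C * 5 ^ n) * ∫⁻ y, g y * u y := by
  have : NeZero m0 := ⟨hm1⟩
  set D : ℝ≥0∞ := 2 * a * (C * a + 1) * C * 5 ^ n with hD
  set T : ι → ℝ≥0∞ := fun i => a ^ lev i * a *
        ∫⁻ y in {y | a ^ lev i < v y} ∩ Metric.closedBall (x i) (5 * r i), u y with hT
  let cls : ι → ℕ × ZMod m0 := fun i => ((lev i - z i).toNat, (lev i : ZMod m0))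
  have hc : ∀ c : ℕ × ZMod m0, ∑' i : cls ⁻¹' {c}, T i ≤ 2⁻¹ ^ c.1 * (D * ∫⁻ y, g y * u y) := by
    intro c
    set A : Set ι := cls ⁻¹' {c} with hA
    have hAl : ∀ j ∈ A, lev j - z j = c.1 := by
      intro j hj
      have h1 : cls j = c := hj
      rw [← h1]
      have := hl j
      simp only [cls]
      rw [Int.toNat_of_nonneg (by omega)]
    have hAg : ∀ i ∈ A, ∀ j ∈ A, lev i < lev j → lev i + m0 ≤ lev j := by
      intro i hi j hj hij
      have h1 : cls i = c := hi
      have h2 : cls j = c := hj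
      have h3 : (lev i : ZMod m0) = (lev j : ZMod m0) := by
        have := h1.trans h2.symm
        exact congrArg Prod.snd this
      rw [ZMod.intCast_eq_intCast_iff_dvd_sub] at h3
      have := Int.le_of_dvd (by omega) h3
      omega
    set E : ι → Set (Fin n → ℝ) := fun i => Metric.closedBall (x i) (r i) \
        ⋃ j ∈ {j ∈ A | lev i < lev j}, Metric.closedBall (x j) (r j) with hE
    have hEm : ∀ i, MeasurableSet (E i) := fun i => by
      refine Metric.isClosed_closedBall.measurableSet.diff ?_
      exact MeasurableSet.biUnion (to_countable _) fun j _ =>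
        Metric.isClosed_closedBall.measurableSet
    have hlt : ∀ i ∈ A, ∀ j ∈ A, lev i < lev j → Disjoint (E i) (E j) := by
      intro i hi j hj hij
      rw [Set.disjoint_left]
      intro y hy1 hy2
      exact hy1.2 (mem_iUnion₂.2 ⟨j, ⟨hj, hij⟩, hy2.1⟩)
    have hdisj : Pairwise (Function.onFun Disjoint (fun i : A => E i)) := by
      intro i j hij
      rcases lt_trichotomy (lev i) (lev j) with h | h | h
      · exact hlt i i.2 j j.2 h
      · exact (F.disj i j (fun h => hij (Subtype.ext h)) h).mono sdiff_subset sdiff_subset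
      · exact (hlt j j.2 i i.2 h).symm
    calc _ ≤ ∑' i : A, 2⁻¹ ^ c.1 * (D * ∫⁻ y in E i, g y * u y) := by
          refine ENNReal.tsum_le_tsum fun i => ?_
          have h1 := F.cube hg hu hv hua hva ha2 hat hCt A i m0 hm hm0
            (fun j hj => (hAl j hj).trans (hAl i i.2).symm) (hAg i i.2) c.1
            (by have := hAl i i.2; omega)
          calc T i = 2⁻¹ ^ c.1 * (T i * 2 ^ c.1) := by
                rw [mul_comm (T i), ← mul_assoc, ← mul_pow,
                  ENNReal.inv_mul_cancel (by norm_num) (by norm_num), one_pow, one_mul]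
            _ ≤ _ := by gcongr
      _ = 2⁻¹ ^ c.1 * (D * ∫⁻ y in ⋃ i : A, E i, g y * u y) := by
          rw [ENNReal.tsum_mul_left, ENNReal.tsum_mul_left,
            lintegral_iUnion (fun i : A => hEm i) hdisj]
      _ ≤ _ := by gcongr; exact Measure.restrict_le_self
  calc _ = ∑' c : ℕ × ZMod m0, ∑' i : cls ⁻¹' {c}, T i := (ENNReal.tsum_fiberwise T cls).symm
    _ ≤ ∑' c : ℕ × ZMod m0, 2⁻¹ ^ c.1 * (D * ∫⁻ y, g y * u y) :=
        ENNReal.tsum_le_tsum hc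
    _ = ∑' k : ℕ, ∑' _ : ZMod m0, 2⁻¹ ^ k * (D * ∫⁻ y, g y * u y) :=
        ENNReal.tsum_prod (f := fun (k : ℕ) (_ : ZMod m0) => 2⁻¹ ^ k * (D * ∫⁻ y, g y * u y))
    _ = _ := by
        have : ∀ k : ℕ, ∑' _ : ZMod m0, (2⁻¹ : ℝ≥0∞) ^ k * (D * ∫⁻ y, g y * u y) =
            2⁻¹ ^ k * (m0 * (D * ∫⁻ y, g y * u y)) := by
          intro k
          rw [tsum_fintype, Finset.sum_const, Finset.card_univ, ZMod.card, nsmul_eq_mul]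
          ring
        simp_rw [this]
        rw [ENNReal.tsum_mul_right, ENNReal.tsum_geometric, ENNReal.one_sub_inv_two, inv_inv]
        ring

theorem mixed_integrable {n : ℕ} (hn : 0 < n) {u v : (Fin n → ℝ) → ℝ≥0∞} {C : ℝ≥0∞}
    (hu : GoodW u C) (hv : GoodW v C) (hC1 : 1 ≤ C) (hCt : C ≠ ⊤) :
    ∃ D : ℝ≥0∞, D ≠ ⊤ ∧ ∀ g : (Fin n → ℝ) → ℝ≥0∞, ∫⁻ y, g y ≠ ⊤ →
      ∫⁻ y in {y | ∃ r, 0 < r ∧ v y * volume (Metric.closedBall y r) <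
        ∫⁻ z in Metric.closedBall y r, g z}, u y * v y ≤ D * ∫⁻ y, g y * u y := by
  obtain ⟨K1, hK11, hK1t, hK1⟩ := ainf hu hC1 hCt
  obtain ⟨K2, hK21, hK2t, hK2⟩ := ainf hv hC1 hCt
  set a : ℝ≥0∞ := 2 * max K1 K2 with ha
  have hat : a ≠ ⊤ := ENNReal.mul_ne_top (by norm_num) (by simp [hK1t, hK2t])
  have ha2 : 2 ≤ a := by
    calc (2 : ℝ≥0∞) = 2 * 1 := by simp
      _ ≤ _ := by rw [ha]; gcongr; exact hK11.trans (le_max_left _ _)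
  have ha0 : a ≠ 0 := (lt_of_lt_of_le (by norm_num) ha2).ne'
  have ha1 : 1 < a := lt_of_lt_of_le (by norm_num) ha2
  have hua : AInf u a := by
    intro x0 R hR E hE i D hED
    refine hK1 x0 R hR E hE i D (le_trans ?_ hED)
    rw [ha]; gcongr; exact le_max_left _ _
  have hva : AInf v a := by
    intro x0 R hR E hE i D hED
    refine hK2 x0 R hR E hE i D (le_trans ?_ hED)
    rw [ha]; gcongr; exact le_max_right _ _
  have hC0 : C ≠ 0 := (lt_of_lt_of_le one_pos hC1).ne'
  obtain ⟨N, hN⟩ := ENNReal.exists_nat_gt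
    (r := 4 * (2 ^ n * ((C * a + 1) * (C * a * 5 ^ n)))) (by finiteness)
  set m0 : ℕ := max (max N (3 ^ n)) 1 with hm0d
  have hm : 3 ^ n ≤ 2 ^ m0 :=
    ((le_max_right N (3 ^ n)).trans (le_max_left _ 1)).trans Nat.lt_two_pow_self.le
  have hm1 : m0 ≠ 0 := by
    have := le_max_right (max N (3 ^ n)) 1
    omega
  have hm0 : 4 * (2 ^ n * ((C * a + 1) * (C * a * 5 ^ n))) ≤ (2 : ℝ≥0∞) ^ m0 := by
    refine hN.le.trans ?_
    have h1 : N ≤ 2 ^ m0 :=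
      ((le_max_left N (3 ^ n)).trans (le_max_left _ 1)).trans Nat.lt_two_pow_self.le
    exact_mod_cast h1
  refine ⟨2 * m0 * (2 * a * (C * a + 1) * C * 5 ^ n), by finiteness, ?_⟩
  intro g hg
  have hp0 : ∀ k : ℤ, a ^ k ≠ 0 := fun k => (ENNReal.zpow_pos ha0 hat _).ne'
  have hpt : ∀ k : ℤ, a ^ k ≠ ⊤ := fun k => (ENNReal.zpow_lt_top ha0 hat _).ne
  set S : ℤ → Set (Fin n → ℝ) := fun k => {y | (a ^ k < v y ∧ v y ≤ a ^ k * a) ∧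
    ∃ r, 0 < r ∧ a ^ k * volume (Metric.closedBall y r) < ∫⁻ z in Metric.closedBall y r, g z} with hS
  have hlc := fun k : ℤ => level_cover hn g hg hv (a ^ k) (hp0 k) (hpt k) (a ^ k * a) (S k)
    (fun y hy => ⟨hy.1.2, hy.2⟩)
  choose J r hJc hJd hJ hcov using hlc
  have hJc' : ∀ k, Countable (J k) := fun k => (hJc k).to_subtype
  let ι := Σ k : ℤ, J k
  have hz : ∀ i : ι, ∃ z : ℤ, 
      C * a ^ z * volume (Metric.closedBall (i.2 : Fin n → ℝ) (5 * r i.1 i.2)) <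
        ∫⁻ y in Metric.closedBall (i.2 : Fin n → ℝ) (5 * r i.1 i.2), v y ∧
      ∫⁻ y in Metric.closedBall (i.2 : Fin n → ℝ) (5 * r i.1 i.2), v y ≤
        C * (a ^ z * a) * volume (Metric.closedBall (i.2 : Fin n → ℝ) (5 * r i.1 i.2)) := by
    intro i
    have hr := (hJ i.1 i.2 i.2.2).1
    set Q := Metric.closedBall (i.2 : Fin n → ℝ) (5 * r i.1 i.2) with hQ
    have hQ0 : volume Q ≠ 0 := vol_ne_zero _ _ (by linarith)
    have hQt : volume Q ≠ ⊤ := vol_ne_top _ _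
    have hv0 : ∫⁻ y in Q, v y ≠ 0 := by
      intro h
      rw [lintegral_eq_zero_iff hv.meas] at h
      have h2 : ∀ᵐ y ∂(volume.restrict Q), False := by
        filter_upwards [h, ae_restrict_of_ae hv.pos] with y h1 h2
        rw [h1] at h2
        exact lt_irrefl _ h2
      rw [Filter.eventually_false_iff_eq_bot, ae_eq_bot, Measure.restrict_eq_zero] at h2
      exact hQ0 h2
    have hvt : ∫⁻ y in Q, v y ≠ ⊤ := hv.loc _ _ (by linarith)
    have hCQ0 : C * volume Q ≠ 0 := mul_ne_zero hC0 hQ0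
    have hCQt : C * volume Q ≠ ⊤ := ENNReal.mul_ne_top hCt hQt
    obtain ⟨z, hz1, hz2⟩ := ENNReal.exists_mem_Ioc_zpow
      (x := (∫⁻ y in Q, v y) / (C * volume Q)) (ENNReal.div_ne_zero.2 ⟨hv0, hCQt⟩)
      (ENNReal.div_ne_top hvt hCQ0) ha1 hat
    refine ⟨z, ?_, ?_⟩
    · rw [ENNReal.lt_div_iff_mul_lt (Or.inl hCQ0) (Or.inl hCQt)] at hz1
      refine lt_of_eq_of_lt ?_ hz1
      ring
    · rw [ENNReal.div_le_iff hCQ0 hCQt, ENNReal.zpow_add ha0 hat, zpow_one] at hz2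
      refine hz2.trans (le_of_eq ?_)
      ring
  choose z hz1 hz2 using hz
  have F : Fam ι g v C a (fun i => (i.2 : Fin n → ℝ)) (fun i => r i.1 i.2) (fun i => i.1) z :=
    { rpos := fun i => (hJ i.1 i.2 i.2.2).1
      lo := fun i => (hJ i.1 i.2 i.2.2).2.1
      hi := fun i => (hJ i.1 i.2 i.2.2).2.2.1
      disj := by
        rintro ⟨k, y⟩ ⟨k', y'⟩ hne (h : k = k')
        subst h
        refine hJd k y.2 y'.2 ?_
        intro h
        exact hne (by rw [Subtype.ext h])
      zlo := hz1
      zhi := hz2 }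
  have hl : ∀ i : ι, z i ≤ i.1 := by
    intro i
    have h1 := (hz1 i).trans_le (hJ i.1 i.2 i.2.2).2.2.2
    have h2 := lt_of_mul_lt_mul_left' (lt_of_mul_lt_mul_right' h1)
    by_contra hcon
    rw [not_le] at hcon
    have h3 : a ^ (i.1 + 1) ≤ a ^ z i := ENNReal.zpow_le_of_le ha1.le hcon
    rw [ENNReal.zpow_add ha0 hat, zpow_one] at h3
    exact absurd h3 (not_le.2 h2)
  have htot := F.total hg hu hv hua hva ha2 hat hCt m0 hm hm1 hm0 hl
  refine le_trans ?_ htot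
  have hΩ : ({y | ∃ r, 0 < r ∧ v y * volume (Metric.closedBall y r) <
        ∫⁻ z in Metric.closedBall y r, g z} : Set (Fin n → ℝ)) ≤ᵐ[volume]
      (⋃ k, S k : Set (Fin n → ℝ)) := by
    filter_upwards [hv.pos] with y hy hy2
    obtain ⟨ρ, hρ, hρ2⟩ := hy2
    obtain ⟨k, hk1, hk2⟩ := ENNReal.exists_mem_Ioc_zpow hy.ne' (hv.fin y) ha1 hat
    rw [ENNReal.zpow_add ha0 hat, zpow_one] at hk2
    refine mem_iUnion.2 ⟨k, ⟨hk1, hk2⟩, ρ, hρ, lt_of_le_of_lt ?_ hρ2⟩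
    gcongr
  calc _ ≤ ∫⁻ y in ⋃ k, S k, u y * v y := lintegral_mono_set' hΩ
    _ ≤ ∑' k, ∫⁻ y in S k, u y * v y := lintegral_iUnion_le _ _
    _ ≤ ∑' k, ∑' j : J k, (a ^ k * a * ∫⁻ y in {y | a ^ k < v y} ∩
          Metric.closedBall (j : Fin n → ℝ) (5 * r k j), u y) := by
        refine ENNReal.tsum_le_tsum fun k => ?_
        have hT : MeasurableSet {y | v y ≤ a ^ k * a} := measurableSet_le hv.meas measurable_const
        have hST : S k ⊆ {y | v y ≤ a ^ k * a} := fun y hy => hy.1.2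
        calc _ ≤ ∫⁻ y in S k, (a ^ k * a) * u y := by
              apply lintegral_mono_ae
              apply ae_restrict_of_ae_restrict_of_subset hST
              rw [ae_restrict_iff' hT]
              refine Filter.Eventually.of_forall fun y hy => ?_
              rw [mem_ofPred_eq] at hy
              rw [mul_comm]
              gcongr
          _ = (a ^ k * a) * ∫⁻ y in S k, u y := lintegral_const_mul _ hu.meas
          _ ≤ (a ^ k * a) * ∫⁻ y in ⋃ j : J k, {y | a ^ k < v y} ∩
              Metric.closedBall (j : Fin n → ℝ) (5 * r k j), u y := by
              refine mul_le_mul' le_rfl (lintegral_mono_set' ?_)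
              filter_upwards [hcov k] with y hy hyS
              obtain ⟨j, hj, hyj⟩ := hy hyS
              exact mem_iUnion.2 ⟨⟨j, hj⟩, hyS.1.1, hyj⟩
          _ ≤ _ := by
              rw [ENNReal.tsum_mul_left]
              exact mul_le_mul' le_rfl (lintegral_iUnion_le _ _)
    _ = _ := (ENNReal.tsum_sigma' (fun i : ι => a ^ i.1 * a * ∫⁻ y in {y | a ^ i.1 < v y} ∩
          Metric.closedBall (i.2 : Fin n → ℝ) (5 * r i.1 i.2), u y)).symm


theorem mixed_general {n : ℕ} (hn : 0 < n) {u v : (Fin n → ℝ) → ℝ≥0∞} {C : ℝ≥0∞}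
    (hu : GoodW u C) (hv : GoodW v C) (hC1 : 1 ≤ C) (hCt : C ≠ ⊤) :
    ∃ D : ℝ≥0∞, D ≠ ⊤ ∧ ∀ g : (Fin n → ℝ) → ℝ≥0∞, AEMeasurable g volume → (∀ y, g y ≠ ⊤) →
      ∫⁻ y in {y | ∃ r, 0 < r ∧ v y * volume (Metric.closedBall y r) <
        ∫⁻ z in Metric.closedBall y r, g z}, u y * v y ≤ D * ∫⁻ y, g y * u y := by
  obtain ⟨D, hDt, hD⟩ := mixed_integrable hn hu hv hC1 hCt
  refine ⟨D, hDt, fun g hgm hgt => ?_⟩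
  set G : ℕ → (Fin n → ℝ) → ℝ≥0∞ := fun N =>
    (Metric.closedBall (0 : Fin n → ℝ) N).indicator (fun y => min (g y) N) with hG
  have hGle : ∀ N y, G N y ≤ g y := by
    intro N y
    simp only [hG]
    refine (indicator_le_self _ _ _).trans (min_le_left _ _)
  have hGmono : Monotone G := by
    intro N M hNM y
    simp only [hG]
    have hNM' : (N : ℝ) ≤ M := by exact_mod_cast hNM
    by_cases h : y ∈ Metric.closedBall (0 : Fin n → ℝ) N
    · rw [indicator_of_mem h,
        indicator_of_mem (Metric.closedBall_subset_closedBall hNM' h)]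
      exact min_le_min le_rfl (by exact_mod_cast hNM)
    · rw [indicator_of_notMem h]
      exact zero_le
  have hGsup : ∀ y, ⨆ N, G N y = g y := by
    intro y
    refine le_antisymm (iSup_le fun N => hGle N y) ?_
    obtain ⟨N1, hN1⟩ := ENNReal.exists_nat_gt (hgt y)
    obtain ⟨N2, hN2⟩ := exists_nat_gt ‖y‖
    refine le_trans ?_ (le_iSup _ (max N1 N2))
    simp only [hG]
    rw [indicator_of_mem]
    · rw [min_eq_left]
      refine hN1.le.trans ?_
      exact_mod_cast le_max_left N1 N2
    · rw [mem_closedBall_zero_iff]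
      refine hN2.le.trans ?_
      exact_mod_cast le_max_right N1 N2
  have hGm : ∀ N, AEMeasurable (G N) volume := fun N =>
    (hgm.min aemeasurable_const).indicator Metric.isClosed_closedBall.measurableSet
  have hGint : ∀ N, ∫⁻ y, G N y ≠ ⊤ := by
    intro N
    simp only [hG]
    rw [lintegral_indicator Metric.isClosed_closedBall.measurableSet]
    refine ne_top_of_le_ne_top ?_ (lintegral_mono (fun y => min_le_right (g y) (N : ℝ≥0∞)))
    rw [lintegral_const, Measure.restrict_apply_univ]
    exact ENNReal.mul_ne_top (by simp) (vol_ne_top _ _)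
  set Om : ℕ → Set (Fin n → ℝ) := fun N => {y | ∃ r, 0 < r ∧
    v y * volume (Metric.closedBall y r) < ∫⁻ z in Metric.closedBall y r, G N z} with hOm
  have hOmono : Monotone Om := by
    intro N M hNM y hy
    obtain ⟨r, hr, h⟩ := hy
    exact ⟨r, hr, h.trans_le (lintegral_mono fun z => hGmono hNM z)⟩
  have hsub : {y | ∃ r, 0 < r ∧ v y * volume (Metric.closedBall y r) <
        ∫⁻ z in Metric.closedBall y r, g z} ⊆ ⋃ N, Om N := by
    intro y hy
    obtain ⟨r, hr, h⟩ := hy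
    have h1 : ∫⁻ z in Metric.closedBall y r, g z =
        ⨆ N, ∫⁻ z in Metric.closedBall y r, G N z := by
      rw [← lintegral_iSup' (fun N => (hGm N).restrict)
        (Filter.Eventually.of_forall fun z N M hNM => hGmono hNM z)]
      simp_rw [hGsup]
    rw [h1, lt_iSup_iff] at h
    obtain ⟨N, hN⟩ := h
    exact mem_iUnion.2 ⟨N, r, hr, hN⟩
  refine (lintegral_mono_set hsub).trans ?_
  rw [← withDensity_apply', hOmono.measure_iUnion]
  refine iSup_le fun N => ?_
  rw [withDensity_apply']
  refine (hD (G N) (hGint N)).trans ?_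
  gcongr with y
  exact hGle N y

theorem IsCube.preimage {n : ℕ} {Q : Set (ESp n)} (hQ : IsCube Q) :
    ∃ (x : Fin n → ℝ) (r : ℝ), 0 < r ∧ (WithLp.toLp 2) ⁻¹' Q = Metric.closedBall x r := by
  obtain ⟨c, h, hh, rfl⟩ := hQ
  refine ⟨fun i => c i + h / 2, h / 2, by positivity, ?_⟩
  ext y
  rw [Metric.mem_closedBall, dist_pi_le_iff (by positivity)]
  simp only [mem_preimage, mem_ofPred_eq, Real.dist_eq, abs_le]
  refine forall_congr' fun i => ?_
  constructor
  · rintro ⟨h1, h2⟩; constructor <;> linarith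
  · rintro ⟨h1, h2⟩; constructor <;> linarith

theorem isCube_ball {n : ℕ} (x : Fin n → ℝ) (r : ℝ) (hr : 0 < r) :
    ∃ Q : Set (ESp n), IsCube Q ∧ (WithLp.toLp 2) ⁻¹' Q = Metric.closedBall x r := by
  refine ⟨_, ⟨fun i => x i - r, 2 * r, by positivity, rfl⟩, ?_⟩
  ext y
  rw [Metric.mem_closedBall, dist_pi_le_iff hr.le]
  simp only [mem_preimage, mem_ofPred_eq, Real.dist_eq, abs_le]
  refine forall_congr' fun i => ?_
  constructor
  · rintro ⟨h1, h2⟩; constructor <;> linarith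
  · rintro ⟨h1, h2⟩; constructor <;> linarith

theorem emb_toLp {n : ℕ} : MeasurableEmbedding (WithLp.toLp 2 : (Fin n → ℝ) → ESp n) :=
  (MeasurableEquiv.toLp 2 (Fin n → ℝ)).measurableEmbedding

theorem mp_toLp {n : ℕ} : MeasurePreserving (WithLp.toLp 2 : (Fin n → ℝ) → ESp n) :=
  PiLp.volume_preserving_toLp (Fin n)

theorem transfer_set {n : ℕ} (F : ESp n → ℝ≥0∞) (S : Set (ESp n)) :
    ∫⁻ x in S, F x = ∫⁻ y in (WithLp.toLp 2) ⁻¹' S, F (WithLp.toLp 2 y) :=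
  (mp_toLp.setLIntegral_comp_preimage_emb emb_toLp F S).symm

theorem transfer_vol {n : ℕ} (S : Set (ESp n)) :
    volume S = volume ((WithLp.toLp 2 : (Fin n → ℝ) → ESp n) ⁻¹' S) :=
  (mp_toLp.measure_preimage_emb emb_toLp S).symm

theorem goodW_of {n : ℕ} {w : ESp n → ℝ} (hw : IsWeight w) {C C' : ℝ≥0∞} (h : A1Const w C)
    (hCC : C ≤ C') :
    GoodW (fun y : Fin n → ℝ => ENNReal.ofReal (w (WithLp.toLp 2 y))) C' where
  meas := (hw.1.comp emb_toLp.measurable).ennreal_ofReal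
  fin := fun _ => ENNReal.ofReal_ne_top
  pos := by
    have := mp_toLp.quasiMeasurePreserving.ae hw.2.2.1
    filter_upwards [this] with y hy
    exact ENNReal.ofReal_pos.2 hy
  loc := by
    intro x r hr
    obtain ⟨Q, hQ, hQe⟩ := isCube_ball x r hr
    have := hw.2.2.2 Q hQ
    rw [wMeas, transfer_set, hQe] at this
    exact this.ne
  a1 := by
    intro x r hr
    obtain ⟨Q, hQ, hQe⟩ := isCube_ball x r hr
    have h1 := h Q hQ
    have hQm : MeasurableSet Q := by
      have h0 : MeasurableSet ((MeasurableEquiv.toLp 2 (Fin n → ℝ)) ⁻¹' Q) := by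
        change MeasurableSet ((WithLp.toLp 2) ⁻¹' Q)
        rw [hQe]
        exact Metric.isClosed_closedBall.measurableSet
      exact (MeasurableEquiv.toLp 2 (Fin n → ℝ)).measurableSet_preimage.1 h0
    have h2 : ∀ᵐ y ∂(volume.restrict Q), essInf (fun x => ENNReal.ofReal (w x)) (volume.restrict Q) ≤
      ENNReal.ofReal (w y) := ae_essInf_le
    rw [ae_restrict_iff' hQm] at h2
    filter_upwards [mp_toLp.quasiMeasurePreserving.ae h2] with y hy hyB
    have hyQ : (WithLp.toLp 2 y : ESp n) ∈ Q := by
      rw [← hQe] at hyB; exact hyB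
    rw [wMeas, transfer_set, transfer_vol, hQe] at h1
    have h3 := h1.trans (mul_le_mul' hCC (hy hyQ))
    rw [mul_comm, ← div_eq_mul_inv, ENNReal.div_le_iff (vol_ne_zero _ _ hr) (vol_ne_top _ _)] at h3
    refine h3.trans (le_of_eq ?_)
    ring


/-- **Cruz-Uribe–Martell–Pérez extension of Sawyer's inequality to `ℝⁿ`.**  If `u, v ∈ A₁`
then there is a constant `C` such that for every locally integrable `f` and every `t > 0`,
`uv({x : M(fv)(x)/v(x) > t}) ≤ (C/t) ∫ |f| u v`. -/
theorem CMP_mixed_weak_type {n : ℕ} (hn : 0 < n) (u v : ESp n → ℝ)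
    (hu : IsWeight u) (hv : IsWeight v) (hu1 : IsA1 u) (hv1 : IsA1 v) :
    ∃ C : ℝ≥0∞, C < ⊤ ∧
      ∀ f : ESp n → ℝ, LocallyIntegrable f volume → ∀ t : ℝ, 0 < t →
        wMeas (fun x => u x * v x)
            {x : ESp n | ENNReal.ofReal t < maxFn (fun y => f y * v y) x / ENNReal.ofReal (v x)}
          ≤ (C / ENNReal.ofReal t) * ∫⁻ x, ENNReal.ofReal (|f x| * u x * v x) := by
  obtain ⟨Cu, hCu, hu1⟩ := hu1
  obtain ⟨Cv, hCv, hv1⟩ := hv1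
  set C0 : ℝ≥0∞ := max 1 (max Cu Cv) with hC0
  have hC1 : 1 ≤ C0 := le_max_left _ _
  have hCt : C0 ≠ ⊤ := by simp [hC0, hCu.ne, hCv.ne]
  have hgu := goodW_of hu hu1 ((le_max_left Cu Cv).trans (le_max_right 1 _) : Cu ≤ C0)
  have hgv := goodW_of hv hv1 ((le_max_right Cu Cv).trans (le_max_right 1 _) : Cv ≤ C0)
  obtain ⟨D, hDt, hD⟩ := mixed_general hn hgu hgv hC1 hCt
  refine ⟨D * 2 ^ n, (ENNReal.mul_ne_top hDt (by finiteness)).lt_top, ?_⟩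
  intro f hf t ht
  have htt : ENNReal.ofReal t ≠ ⊤ := ENNReal.ofReal_ne_top
  have ht0 : ENNReal.ofReal t ≠ 0 := (ENNReal.ofReal_pos.2 ht).ne'
  set k : ℝ≥0∞ := 2 ^ n / ENNReal.ofReal t with hk
  have hkt : k ≠ ⊤ := ENNReal.div_ne_top (by finiteness) ht0
  set h : ESp n → ℝ≥0∞ := fun x => ENNReal.ofReal |f x * v x| with hh
  set g : (Fin n → ℝ) → ℝ≥0∞ := fun y => k * h (WithLp.toLp 2 y) with hg
  have hfm : AEMeasurable f volume := hf.aestronglyMeasurable.aemeasurable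
  have hhm : AEMeasurable h volume := by
    have : AEMeasurable (fun x => f x * v x) volume := hfm.mul hv.1.aemeasurable
    exact (this.norm).ennreal_ofReal
  have hgm : AEMeasurable g volume :=
    (hhm.comp_quasiMeasurePreserving mp_toLp.quasiMeasurePreserving).const_mul k
  have hmain := hD g hgm (fun y => ENNReal.mul_ne_top hkt ENNReal.ofReal_ne_top)
  rw [wMeas, transfer_set]
  have hsub : ((WithLp.toLp 2 : (Fin n → ℝ) → ESp n) ⁻¹' {x : ESp n | ENNReal.ofReal t <
        maxFn (fun y => f y * v y) x / ENNReal.ofReal (v x)} : Set (Fin n → ℝ)) ≤ᵐ[volume]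
      ({y | ∃ r, 0 < r ∧ ENNReal.ofReal (v (WithLp.toLp 2 y)) * volume (Metric.closedBall y r) <
        ∫⁻ z in Metric.closedBall y r, g z} : Set (Fin n → ℝ)) := by
    filter_upwards [hgv.pos] with y hy0 hy
    have hy1 : ENNReal.ofReal t < maxFn (fun y => f y * v y) (WithLp.toLp 2 y) /
      ENNReal.ofReal (v (WithLp.toLp 2 y)) := hy
    rw [ENNReal.lt_div_iff_mul_lt (Or.inl hy0.ne') (Or.inl ENNReal.ofReal_ne_top), maxFn,
      lt_iSup_iff] at hy1
    obtain ⟨Q, hQ⟩ := hy1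
    rw [lt_iSup_iff] at hQ
    obtain ⟨hQc, hQ⟩ := hQ
    rw [lt_iSup_iff] at hQ
    obtain ⟨hyQ, hQ⟩ := hQ
    obtain ⟨c, ρ, hρ, hQe⟩ := hQc.preimage
    rw [transfer_set, transfer_vol, hQe] at hQ
    have hyB : y ∈ Metric.closedBall c ρ := by rw [← hQe]; exact hyQ
    refine ⟨2 * ρ, by positivity, ?_⟩
    have hsubB : Metric.closedBall c ρ ⊆ Metric.closedBall y (2 * ρ) := by
      apply Metric.closedBall_subset_closedBall'
      rw [Metric.mem_closedBall, dist_comm] at hyB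
      linarith
    rw [mul_comm (volume _)⁻¹, ← div_eq_mul_inv,
      ENNReal.lt_div_iff_mul_lt (Or.inl (vol_ne_zero _ _ hρ)) (Or.inl (vol_ne_top _ _))] at hQ
    have h2 : ENNReal.ofReal 2 = 2 := by norm_num
    have hkk : k * ENNReal.ofReal t = 2 ^ n := ENNReal.div_mul_cancel ht0 htt
    have hk0 : k ≠ 0 := ENNReal.div_ne_zero.2 ⟨by positivity, htt⟩
    calc _ = k * (ENNReal.ofReal t * ENNReal.ofReal (v (WithLp.toLp 2 y)) *
            volume (Metric.closedBall c ρ)) := by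
          rw [vol_mul y c 2 ρ (by norm_num) hρ.le, h2, ← hkk]; ring
      _ < k * ∫⁻ z in Metric.closedBall c ρ, h (WithLp.toLp 2 z) :=
          (ENNReal.mul_lt_mul_iff_right hk0 hkt).2 hQ
      _ = ∫⁻ z in Metric.closedBall c ρ, g z := (lintegral_const_mul' _ _ hkt).symm
      _ ≤ _ := lintegral_mono_set hsubB
  calc _ ≤ _ := lintegral_mono_set' hsub
    _ = _ := lintegral_congr fun y => ENNReal.ofReal_mul (hu.2.1 _)
    _ ≤ _ := hmain
    _ = D * (k * ∫⁻ y : Fin n → ℝ, ENNReal.ofReal (|f (WithLp.toLp 2 y)| * u (WithLp.toLp 2 y) *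
          v (WithLp.toLp 2 y))) := by
        rw [← lintegral_const_mul' _ _ hkt]
        congr 1
        refine lintegral_congr fun y => ?_
        simp only [hg, hh]
        rw [mul_assoc, ← ENNReal.ofReal_mul (abs_nonneg _), abs_mul, abs_of_nonneg (hv.2.1 _)]
        congr 2
        ring
    _ = D * (k * ∫⁻ x : ESp n, ENNReal.ofReal (|f x| * u x * v x)) := by
        rw [← mp_toLp.lintegral_comp_emb emb_toLp]
    _ = _ := by
        rw [hk, div_eq_mul_inv, div_eq_mul_inv]; ring


end
end
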